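/- arXiv:1606.03499 — 2 statements merged into one kernel-verified Lean document; each statement's English description precedes it below -/
import Mathlib

section
/- Let n ≥ 3 and let (ψ_j)_{j∈ℕ} be a sequence of smooth ℤⁿ-periodic real-valued eigenfunctions of the Euclidean Laplacian on ℝⁿ with eigenvalues λ_j → ∞, whose restrictions to the fundamental domain [0,1)ⁿ form an orthonormal basis of L²([0,1)ⁿ). For every ε > 0 there exist a constant a₁ > 0 (depending only on n and ε) and a subset S_ε ⊆ ℕ of full density such that for every j ∈ S_ε, every nodal domain Ω of ψ_j satisfies in(Ω) ≥ a₁ λ_j^{-1/2-(n-2)²/(4n)-ε}. -/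
open MeasureTheory Metric Filter Real

noncomputable section

/-- `ψ : ℝⁿ → ℝ` is `ℤⁿ`-periodic: `ψ (x + v) = ψ x` for every integer vector `v`. -/
def ZnPeriodic (n : ℕ) (ψ : EuclideanSpace ℝ (Fin n) → ℝ) : Prop :=
  ∀ (x : EuclideanSpace ℝ (Fin n)) (v : Fin n → ℤ),
    ψ (show EuclideanSpace ℝ (Fin n) from WithLp.toLp 2 fun i => x i + (v i : ℝ)) = ψ x

/-- The Euclidean Laplacian `Δψ = ∑ᵢ ∂²ψ/∂xᵢ²`. -/
def lap (n : ℕ) (ψ : EuclideanSpace ℝ (Fin n) → ℝ) (x : EuclideanSpace ℝ (Fin n)) : ℝ :=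
  ∑ i : Fin n,
    fderiv ℝ (fun y => fderiv ℝ ψ y (EuclideanSpace.single i (1:ℝ))) x
      (EuclideanSpace.single i (1:ℝ))

/-- `Ω` is a nodal domain of `ψ`: a connected component of `{ψ ≠ 0}`. -/
def IsNodalDomain {n : ℕ} (ψ : EuclideanSpace ℝ (Fin n) → ℝ)
    (Ω : Set (EuclideanSpace ℝ (Fin n))) : Prop :=
  ∃ x, ψ x ≠ 0 ∧ Ω = connectedComponentIn {y | ψ y ≠ 0} x

/-- The inner radius of a set: the supremum of radii of open balls contained in it. -/
def innerRadius {n : ℕ} (Ω : Set (EuclideanSpace ℝ (Fin n))) : ℝ :=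
  sSup {ρ : ℝ | 0 < ρ ∧ ∃ c, Metric.ball c ρ ⊆ Ω}

/-- The fundamental domain `[0,1)ⁿ` of the torus `ℝⁿ/ℤⁿ`. -/
def fundDom (n : ℕ) : Set (EuclideanSpace ℝ (Fin n)) :=
  {x | ∀ i, x i ∈ Set.Ico (0:ℝ) 1}

/-- `S ⊆ ℕ` has full density: `#(S ∩ [1,N]) / N → 1`. -/
def FullDensity (S : Set ℕ) : Prop :=
  Filter.Tendsto (fun N => (Nat.card ↥(S ∩ Set.Icc 1 N) : ℝ) / N) Filter.atTop (nhds 1)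

section TirHelpers

variable {n : ℕ}

lemma tir_rolle (M : ℕ) : ∀ (f : ℝ → ℝ), ContDiff ℝ (⊤ : ℕ∞) f → ∀ (a b : ℝ) (s : Finset ℝ),
    s.card = M + 1 → (∀ x ∈ s, a ≤ x ∧ x ≤ b) → (∀ x ∈ s, f x = 0) →
    ∃ ξ, a ≤ ξ ∧ ξ ≤ b ∧ iteratedDeriv M f ξ = 0 := by
  induction M with
  | zero =>
    intro f hf a b s hs hab h0
    obtain ⟨x, hx⟩ := Finset.card_pos.mp (by omega : 0 < s.card)
    exact ⟨x, (hab x hx).1, (hab x hx).2, by simpa using h0 x hx⟩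
  | succ M ih =>
    intro f hf a b s hs hab h0
    have hdf : ContDiff ℝ (⊤ : ℕ∞) (deriv f) := by
      have := contDiff_infty_iff_deriv.1 hf
      exact this.2
    let e := s.orderEmbOfFin hs
    have he : ∀ i, e i ∈ s := fun i => s.orderEmbOfFin_mem hs i
    have key : ∀ i : Fin (M+1), ∃ c, e i.castSucc < c ∧ c < e i.succ ∧ deriv f c = 0 := by
      intro i
      have hlt : e i.castSucc < e i.succ := e.strictMono (Fin.castSucc_lt_succ)
      obtain ⟨c, hc, hc'⟩ := exists_deriv_eq_zero hlt hf.continuous.continuousOn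
        ((h0 _ (he _)).trans (h0 _ (he _)).symm)
      exact ⟨c, hc.1, hc.2, hc'⟩
    choose c hc1 hc2 hc3 using key
    have hmono : StrictMono c := by
      rw [Fin.strictMono_iff_lt_succ]
      intro i
      have h1 := hc2 i.castSucc
      have h2 := hc1 i.succ
      have : i.castSucc.succ = i.succ.castSucc := by simp
      rw [this] at h1
      exact h1.trans h2
    obtain ⟨ξ, h1, h2, h3⟩ := ih (deriv f) hdf a b (Finset.univ.image c)
      (by rw [Finset.card_image_of_injective _ hmono.injective]; simp)
      (by
        intro x hx
        obtain ⟨i, -, rfl⟩ := Finset.mem_image.1 hx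
        exact ⟨(hab _ (he _)).1.trans (hc1 i).le, (hc2 i).le.trans (hab _ (he _)).2⟩)
      (by
        intro x hx
        obtain ⟨i, -, rfl⟩ := Finset.mem_image.1 hx
        exact hc3 i)
    exact ⟨ξ, h1, h2, by rw [iteratedDeriv_succ']; exact h3⟩

lemma tir_prodfac (a b : ℕ) : ∏ j ∈ (Finset.Icc (-(a:ℤ)) b).erase 0, |j| = a.factorial * b.factorial := by
  induction b with
  | zero =>
    induction a with
    | zero => simp
    | succ a ih =>
      have : (Finset.Icc (-((a+1:ℕ):ℤ)) ((0:ℕ):ℤ)).erase 0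
          = insert (-((a+1:ℕ):ℤ)) ((Finset.Icc (-(a:ℤ)) ((0:ℕ):ℤ)).erase 0) := by
        ext x; simp only [Finset.mem_erase, Finset.mem_insert, Finset.mem_Icc]; omega
      rw [this, Finset.prod_insert (by simp), ih]
      simp [Nat.factorial_succ]
      left
      rw [show (-1 + -(a:ℤ)) = -((a:ℤ)+1) by ring, abs_neg, abs_of_nonneg (by positivity)]
  | succ b ih =>
    have : (Finset.Icc (-(a:ℤ)) ((b+1:ℕ):ℤ)).erase 0
          = insert (((b+1:ℕ):ℤ)) ((Finset.Icc (-(a:ℤ)) ((b:ℕ):ℤ)).erase 0) := by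
      ext x; simp only [Finset.mem_erase, Finset.mem_insert, Finset.mem_Icc]; omega
    rw [this, Finset.prod_insert (by simp), ih, abs_of_nonneg (by positivity)]
    push_cast [Nat.factorial_succ]; ring

lemma tir_fac (m i : ℕ) (h : i ≤ m) : m.factorial * m.factorial ≤ (m+i).factorial * (m-i).factorial := by
  have h1 := Nat.choose_le_centralBinom (m-i) m
  have h2 := Nat.add_choose_mul_factorial_mul_factorial (m+i) (m-i)
  have h3 := Nat.add_choose_mul_factorial_mul_factorial m m
  rw [show m + i + (m-i) = 2*m by omega] at h2
  rw [show m + m = 2*m by omega] at h3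
  rw [Nat.centralBinom] at h1
  by_contra hlt
  push Not at hlt
  have : (2*m).choose (m-i) * ((m+i).factorial * (m-i).factorial) < (2*m).choose m * (m.factorial * m.factorial) := by
    have hp : 0 < (2*m).choose m := Nat.choose_pos (by omega)
    calc _ ≤ (2*m).choose m * ((m+i).factorial * (m-i).factorial) := Nat.mul_le_mul_right _ h1
      _ < _ := Nat.mul_lt_mul_of_pos_left hlt hp
  rw [← mul_assoc, ← mul_assoc, h2, h3] at this
  exact lt_irrefl _ this

lemma tir_prod_le (m : ℕ) (i : ℤ) (hi : i ∈ (Finset.Icc (-(m:ℤ)) m).erase 0) :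
    ∏ j ∈ ((Finset.Icc (-(m:ℤ)) m).erase 0).erase i, |j| ≤
      ∏ j ∈ ((Finset.Icc (-(m:ℤ)) m).erase 0).erase i, |i - j| := by
  have hi0 : i ≠ 0 := (Finset.mem_erase.1 hi).1
  have hiI := Finset.mem_Icc.1 (Finset.mem_erase.1 hi).2
  have hpos : 0 < |i| := abs_pos.2 hi0
  have e1 := Finset.mul_prod_erase ((Finset.Icc (-(m:ℤ)) m).erase 0) (fun j => |j|) hi
  rw [tir_prodfac] at e1
  have hmem : (0:ℤ) ∈ (Finset.Icc (-(m:ℤ)) m).erase i := by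
    simp [Ne.symm hi0]
  have e2 := Finset.mul_prod_erase ((Finset.Icc (-(m:ℤ)) m).erase i) (fun j => |i - j|) hmem
  rw [Finset.erase_right_comm] at e2
  have e3 : ∏ j ∈ (Finset.Icc (-(m:ℤ)) m).erase i, |i - j| = (m + i.natAbs).factorial * (m - i.natAbs).factorial := by
    have : ∀ a b : ℕ, (a:ℤ) = m + i → (b:ℤ) = m - i →
        ∏ j ∈ (Finset.Icc (-(m:ℤ)) m).erase i, |i - j| = a.factorial * b.factorial := by
      intro a b ha hb
      rw [← tir_prodfac]
      refine Finset.prod_nbij' (fun j => j - i) (fun j => j + i) ?_ ?_ ?_ ?_ ?_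
      · intro j hj; simp only [Finset.mem_erase, Finset.mem_Icc] at hj ⊢; omega
      · intro j hj; simp only [Finset.mem_erase, Finset.mem_Icc] at hj ⊢; omega
      · intro j _; ring
      · intro j _; ring
      · intro j _; exact abs_sub_comm _ _
    rcases le_total 0 i with h | h
    · rw [this (m + i.natAbs) (m - i.natAbs) (by omega) (by omega)]
    · rw [this (m - i.natAbs) (m + i.natAbs) (by omega) (by omega), mul_comm]
  rw [e3] at e2
  simp only [sub_zero] at e2
  have h5 : ((m.factorial * m.factorial : ℕ):ℤ) ≤ ((m + i.natAbs).factorial * (m - i.natAbs).factorial : ℕ) := by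
    exact_mod_cast tir_fac m i.natAbs (by omega)
  push_cast at h5
  rw [← e1, ← e2] at h5
  exact le_of_mul_le_mul_left h5 hpos

lemma tir_basis_bound (m : ℕ) (hm : 1 ≤ m) (J : Finset ℤ) (hJ : J ⊆ (Finset.Icc (-(m:ℤ)) m).erase 0)
    (i : ℤ) (hi : i ∈ J) :
    ∏ j ∈ J.erase i, (|(j:ℝ)| / |(i:ℝ) - j|) ≤ (2*m:ℝ)^(2*m - J.card) := by
  classical
  set S := (Finset.Icc (-(m:ℤ)) m).erase 0 with hS
  have hcS : S.card = 2*m := by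
    rw [hS, Finset.card_erase_of_mem (by simp), Int.card_Icc]; omega
  have h1 := tir_prod_le m i (hJ hi)
  rw [← hS] at h1
  have h1' : ∏ j ∈ S.erase i, |(j:ℝ)| ≤ ∏ j ∈ S.erase i, |(i:ℝ) - j| := by
    exact_mod_cast h1
  have hpos : ∀ j ∈ S.erase i, 0 < |(i:ℝ) - j| := by
    intro j hj
    have : i ≠ j := fun h => (Finset.mem_erase.1 hj).1 h.symm
    exact abs_pos.2 (sub_ne_zero.2 (by exact_mod_cast this))
  have hpos0 : ∀ j ∈ S, 0 < |(j:ℝ)| := by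
    intro j hj
    have : j ≠ 0 := (Finset.mem_erase.1 hj).1
    exact abs_pos.2 (by exact_mod_cast this)
  have hfull : ∏ j ∈ S.erase i, (|(j:ℝ)| / |(i:ℝ) - j|) ≤ 1 := by
    rw [Finset.prod_div_distrib]
    exact div_le_one_of_le₀ h1' (Finset.prod_nonneg fun j _ => abs_nonneg _)
  have hsub : J.erase i ⊆ S.erase i := Finset.erase_subset_erase _ hJ
  have hsd : S.erase i \ J.erase i = S \ J := by
    ext x; simp only [Finset.mem_sdiff, Finset.mem_erase]
    constructor
    · rintro ⟨⟨a, b⟩, c⟩; exact ⟨b, fun h => c ⟨a, h⟩⟩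
    · rintro ⟨a, b⟩; exact ⟨⟨fun h => b (h ▸ hi), a⟩, fun h => b h.2⟩
  have hspl := Finset.prod_sdiff hsub (f := fun j:ℤ => |(j:ℝ)| / |(i:ℝ) - j|)
  rw [hsd] at hspl
  have hinv : ∏ j ∈ S \ J, (|(i:ℝ) - j| / |(j:ℝ)|) ≤ (2*m:ℝ)^(2*m - J.card) := by
    have : (S \ J).card = 2*m - J.card := by rw [Finset.card_sdiff_of_subset hJ, hcS]
    rw [← this]
    rw [← Finset.prod_const]
    refine Finset.prod_le_prod (fun j _ => by positivity) ?_
    intro j hj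
    have hjS := (Finset.mem_sdiff.1 hj).1
    rw [div_le_iff₀ (hpos0 j hjS)]
    have a1 := Finset.mem_Icc.1 (Finset.mem_erase.1 hjS).2
    have a2 := Finset.mem_Icc.1 (Finset.mem_erase.1 (hJ hi)).2
    have a3 : (1:ℝ) ≤ |(j:ℝ)| := by
      have : (1:ℤ) ≤ |j| := Int.one_le_abs (Finset.mem_erase.1 hjS).1
      exact_mod_cast this
    have a4 : |(i:ℝ) - j| ≤ 2*m := by
      have : |i - j| ≤ 2*m := by rw [abs_le]; constructor <;> omega
      exact_mod_cast this
    have : (0:ℝ) ≤ 2*m := by positivity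
    nlinarith
  have hprod1 : (∏ j ∈ S \ J, (|(i:ℝ) - j| / |(j:ℝ)|)) * ∏ j ∈ S \ J, (|(j:ℝ)| / |(i:ℝ) - j|) = 1 := by
    rw [← Finset.prod_mul_distrib]
    refine Finset.prod_eq_one ?_
    intro j hj
    have hjS : j ∈ S.erase i := by rw [← hsd] at hj; exact (Finset.mem_sdiff.1 hj).1
    have b1 := (hpos j hjS).ne'
    have b2 := (hpos0 j (Finset.mem_erase.1 hjS).2).ne'
    field_simp
  calc ∏ j ∈ J.erase i, (|(j:ℝ)| / |(i:ℝ) - j|)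
      = (∏ j ∈ S \ J, (|(i:ℝ) - j| / |(j:ℝ)|)) * ((∏ j ∈ S \ J, (|(j:ℝ)| / |(i:ℝ) - j|)) * ∏ j ∈ J.erase i, (|(j:ℝ)| / |(i:ℝ) - j|)) := by
        rw [← mul_assoc, hprod1, one_mul]
    _ ≤ (2*m:ℝ)^(2*m - J.card) * 1 := by
        rw [hspl]
        exact mul_le_mul hinv hfull (Finset.prod_nonneg fun j _ => by positivity) (by positivity)
    _ = _ := mul_one _

lemma tir_polyCD (Q : Polynomial ℝ) (k : WithTop ℕ∞) : ContDiff ℝ k (fun x => Q.eval x) := by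
  simpa using Q.contDiff_aeval (𝕜 := ℝ) k

lemma tir_polyder (k : ℕ) : ∀ (Q : Polynomial ℝ) (x : ℝ), iteratedDeriv k (fun x => Q.eval x) x
    = (Polynomial.derivative^[k] Q).eval x := by
  induction k with
  | zero => intro Q x; simp
  | succ k ih =>
    intro Q x
    rw [iteratedDeriv_succ', Function.iterate_succ_apply, ← ih]
    congr 1
    ext y; simp

lemma tir_interp (m : ℕ) (hm : 1 ≤ m) (J : Finset ℤ) (hJ : J ⊆ (Finset.Icc (-(m:ℤ)) m).erase 0)
    (f : ℝ → ℝ) (hf : ContDiff ℝ (⊤ : ℕ∞) f) (D : ℝ) (h1 : ∀ j ∈ J, |f (j / m)| ≤ 1)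
    (hD : ∀ s, |s| ≤ 1 → |iteratedDeriv J.card f s| ≤ D) :
    |f 0| ≤ (2*m:ℝ)^(2*m - J.card + 1) + D / J.card.factorial := by
  classical
  have hmR : (0:ℝ) < m := by exact_mod_cast hm
  set t : ℤ → ℝ := fun j => (j:ℝ) / m with ht
  have htinj : Function.Injective t := by
    intro a b hab
    simp only [ht] at hab
    field_simp at hab
    exact_mod_cast hab
  have hJ0 : ∀ j ∈ J, j ≠ 0 ∧ |(j:ℝ)| ≤ m := by
    intro j hj
    have a1 := Finset.mem_erase.1 (hJ hj)
    have a2 := Finset.mem_Icc.1 a1.2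
    refine ⟨a1.1, ?_⟩
    have : |j| ≤ m := abs_le.2 a2
    exact_mod_cast this
  have ht1 : ∀ j ∈ J, |t j| ≤ 1 := by
    intro j hj
    simp only [ht, abs_div, Nat.abs_cast]
    exact div_le_one_of_le₀ (hJ0 j hj).2 hmR.le
  set P := Lagrange.interpolate J t (fun j => f (t j)) with hP
  set W := Lagrange.nodal J t with hW
  have hW0 : W.eval 0 ≠ 0 := by
    rw [hW, Lagrange.eval_nodal, Finset.prod_ne_zero_iff]
    intro j hj
    simp only [ht, zero_sub, ne_eq, neg_eq_zero, div_eq_zero_iff, not_or]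
    exact ⟨by exact_mod_cast (hJ0 j hj).1, hmR.ne'⟩
  have hW1 : |W.eval 0| ≤ 1 := by
    rw [hW, Lagrange.eval_nodal, Finset.abs_prod]
    refine Finset.prod_le_one (fun j _ => abs_nonneg _) (fun j hj => ?_)
    simpa using ht1 j hj
  set c := (f 0 - P.eval 0) / W.eval 0 with hc
  set Q := P + Polynomial.C c * W with hQ
  have hg : ContDiff ℝ (⊤ : ℕ∞) (fun x => f x - Q.eval x) := by
    exact hf.sub (tir_polyCD Q _)
  obtain ⟨ξ, hξ1, hξ2, hξ⟩ := tir_rolle J.card (fun x => f x - Q.eval x) hg (-1) 1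
    (insert 0 (J.image t))
    (by
      rw [Finset.card_insert_of_notMem, Finset.card_image_of_injective _ htinj]
      intro h
      obtain ⟨j, hj, hj0⟩ := Finset.mem_image.1 h
      simp only [ht, div_eq_zero_iff] at hj0
      rcases hj0 with h | h
      · exact (hJ0 j hj).1 (by exact_mod_cast h)
      · exact hmR.ne' h)
    (by
      intro x hx
      rcases Finset.mem_insert.1 hx with rfl | hx
      · norm_num
      · obtain ⟨j, hj, rfl⟩ := Finset.mem_image.1 hx
        exact abs_le.1 (ht1 j hj))
    (by
      intro x hx
      rcases Finset.mem_insert.1 hx with rfl | hx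
      · simp [hQ, hc, div_mul_cancel₀ _ hW0]
      · obtain ⟨j, hj, rfl⟩ := Finset.mem_image.1 hx
        have e1 := Lagrange.eval_interpolate_at_node (fun j => f (t j)) htinj.injOn hj
        rw [← hP] at e1
        have e2 : W.eval (t j) = 0 := Lagrange.eval_nodal_at_node hj
        simp only [hQ, Polynomial.eval_add, Polynomial.eval_mul, e1, e2]
        simp)
  have hder : iteratedDeriv J.card (fun x => Q.eval x) ξ = c * J.card.factorial := by
    rw [tir_polyder, hQ]
    have hdP : P.degree < J.card := Lagrange.degree_interpolate_lt _ htinj.injOn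
    have hWm : W.Monic := Lagrange.nodal_monic
    have hWd : W.natDegree = J.card := Lagrange.natDegree_nodal
    have e1 : Polynomial.derivative^[J.card] P = 0 := Polynomial.iterate_derivative_eq_zero_of_degree_lt hdP
    have e2 : Polynomial.derivative^[J.card] W = Polynomial.C (J.card.factorial : ℝ) := by
      have : (Polynomial.derivative^[J.card] W).natDegree = 0 := by
        have := Polynomial.natDegree_iterate_derivative W J.card
        omega
      rw [Polynomial.eq_C_of_natDegree_eq_zero this, Polynomial.coeff_iterate_derivative]
      have h3 : W.coeff J.card = 1 := by rw [← hWd]; exact hWm.coeff_natDegree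
      simp [h3, Nat.descFactorial_self]
    rw [iterate_map_add, Polynomial.iterate_derivative_C_mul, e1, e2]
    simp
  have hsub : iteratedDeriv J.card f ξ = c * J.card.factorial := by
    have := iteratedDeriv_fun_sub (n := J.card) (x := ξ) (f := f) (g := fun x => Q.eval x)
      ((hf.of_le (by exact_mod_cast le_top)).contDiffAt) ((tir_polyCD Q _).contDiffAt)
    rw [this, hder] at hξ
    linarith
  have herr : |f 0 - P.eval 0| ≤ D / J.card.factorial := by
    have : f 0 - P.eval 0 = W.eval 0 * (iteratedDeriv J.card f ξ / J.card.factorial) := by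
      rw [hsub, mul_div_cancel_right₀ _ (by positivity), hc, mul_div_cancel₀ _ hW0]
    rw [this, abs_mul, abs_div, Nat.abs_cast]
    have h2 := hD ξ (abs_le.2 ⟨hξ1, hξ2⟩)
    calc _ ≤ 1 * (|iteratedDeriv J.card f ξ| / J.card.factorial) := by gcongr
      _ ≤ _ := by rw [one_mul]; gcongr
  have hPb : |P.eval 0| ≤ (2*m:ℝ)^(2*m - J.card + 1) := by
    rw [hP, Lagrange.interpolate_apply, Polynomial.eval_finsetSum]
    have hcard : J.card ≤ 2*m := by
      refine (Finset.card_le_card hJ).trans ?_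
      rw [Finset.card_erase_of_mem (by simp), Int.card_Icc]; omega
    calc _ ≤ ∑ i ∈ J, |Polynomial.eval 0 (Polynomial.C (f (t i)) * Lagrange.basis J t i)| := Finset.abs_sum_le_sum_abs _ _
      _ ≤ ∑ i ∈ J, (2*m:ℝ)^(2*m - J.card) := by
        refine Finset.sum_le_sum fun i hi => ?_
        rw [Polynomial.eval_mul, Polynomial.eval_C, abs_mul]
        have hb : |Polynomial.eval 0 (Lagrange.basis J t i)| = ∏ j ∈ J.erase i, (|(j:ℝ)| / |(i:ℝ) - j|) := by
          rw [Lagrange.basis, Polynomial.eval_prod, Finset.abs_prod]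
          refine Finset.prod_congr rfl fun j hj => ?_
          simp only [Lagrange.basisDivisor, ht, Polynomial.eval_mul, Polynomial.eval_C, Polynomial.eval_sub, Polynomial.eval_X, zero_sub]
          rw [abs_mul, abs_neg, abs_inv, ← sub_div, abs_div, abs_div, Nat.abs_cast]
          field_simp
        rw [hb]
        calc _ ≤ 1 * ∏ j ∈ J.erase i, (|(j:ℝ)| / |(i:ℝ) - j|) := by
              exact mul_le_mul_of_nonneg_right (h1 i hi) (Finset.prod_nonneg fun j _ => by positivity)
          _ ≤ _ := by rw [one_mul]; exact tir_basis_bound m hm J hJ i hi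
      _ = J.card * (2*m:ℝ)^(2*m - J.card) := by simp
      _ ≤ (2*m) * (2*m:ℝ)^(2*m - J.card) := by
        gcongr; exact_mod_cast hcard
      _ = _ := by rw [pow_succ]; ring
  calc |f 0| = |P.eval 0 + (f 0 - P.eval 0)| := by ring_nf
    _ ≤ _ := (abs_add_le _ _).trans (add_le_add hPb herr)


/-- positive part power -/
def tirp (k : ℕ) (t : ℝ) : ℝ := (max t 0)^k

lemma tirp_nonneg (k : ℕ) (t : ℝ) : 0 ≤ tirp k t := by unfold tirp; positivity

lemma tirp_cont (k : ℕ) : Continuous (tirp k) := by unfold tirp; fun_prop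

lemma tirp_of_nonpos (k : ℕ) {t : ℝ} (h : t ≤ 0) : tirp (k+1) t = 0 := by
  simp [tirp, max_eq_right h]

lemma tirp_le_one (k : ℕ) {t : ℝ} (h : t ≤ 1) : tirp k t ≤ 1 := by
  unfold tirp
  exact pow_le_one₀ (le_max_right _ _) (max_le h zero_le_one)

lemma tirp_deriv (k : ℕ) (t : ℝ) : HasDerivAt (tirp (k+2)) ((k+2) * tirp (k+1) t) t := by
  refine hasDerivAt_of_hasDerivAt_of_ne' (f := tirp (k+2)) (g := fun t => (k+2) * tirp (k+1) t) (x := 0) ?_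
    (tirp_cont _).continuousAt ((continuous_const.mul (tirp_cont _)).continuousAt) t
  intro y hy
  rcases lt_or_gt_of_ne hy with h | h
  · have : tirp (k+2) =ᶠ[nhds y] fun _ => 0 := by
      filter_upwards [Iio_mem_nhds h] with z hz
      exact tirp_of_nonpos _ (le_of_lt hz)
    rw [tirp_of_nonpos _ h.le, mul_zero]
    exact (hasDerivAt_const y (0:ℝ)).congr_of_eventuallyEq this
  · have : tirp (k+2) =ᶠ[nhds y] fun z => z^(k+2) := by
      filter_upwards [Ioi_mem_nhds h] with z hz
      have hz' : (0:ℝ) ≤ z := le_of_lt (Set.mem_Ioi.1 hz)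
      simp [tirp, max_eq_left hz']
    have h2 := (hasDerivAt_pow (k+2) y).congr_of_eventuallyEq this
    convert h2 using 1
    simp [tirp, max_eq_left h.le]

lemma tirp_contDiff1 (k : ℕ) : ContDiff ℝ 1 (tirp (k+2)) := by
  rw [contDiff_one_iff_deriv]
  refine ⟨fun t => (tirp_deriv k t).differentiableAt, ?_⟩
  have : deriv (tirp (k+2)) = fun t => ((k:ℝ)+2) * tirp (k+1) t := by
    ext t; exact (tirp_deriv k t).deriv
  rw [this]; exact continuous_const.mul (tirp_cont _)

lemma tirp_contDiff2 (k : ℕ) : ContDiff ℝ 2 (tirp (k+3)) := by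
  rw [show (2 : WithTop ℕ∞) = 1 + 1 by norm_num, contDiff_succ_iff_deriv]
  refine ⟨fun t => (tirp_deriv (k+1) t).differentiableAt, by simp, ?_⟩
  have : deriv (tirp (k+3)) = fun t => (((k+1:ℕ):ℝ)+2) * tirp (k+2) t := by
    ext t; exact (tirp_deriv (k+1) t).deriv
  rw [this]; exact contDiff_const.mul (tirp_contDiff1 _)


/-- the bump -/
def tirq (k : ℕ) (z : EuclideanSpace ℝ (Fin n)) : ℝ := tirp k (1 - ‖z‖^2)

lemma tirq_cont (k : ℕ) : Continuous (tirq k : EuclideanSpace ℝ (Fin n) → ℝ) := by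
  unfold tirq; exact (tirp_cont k).comp (by fun_prop)

lemma tirq_nonneg (k : ℕ) (z : EuclideanSpace ℝ (Fin n)) : 0 ≤ tirq k z := tirp_nonneg _ _

lemma tirq_le_one (k : ℕ) (z : EuclideanSpace ℝ (Fin n)) : tirq k z ≤ 1 :=
  tirp_le_one _ (by nlinarith [sq_nonneg ‖z‖])

lemma tirq_zero (k : ℕ) (z : EuclideanSpace ℝ (Fin n)) (h : 1 ≤ ‖z‖) : tirq (k+1) z = 0 :=
  tirp_of_nonpos _ (by nlinarith)

lemma tirq_supp (k : ℕ) : HasCompactSupport (tirq (k+1) : EuclideanSpace ℝ (Fin n) → ℝ) := by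
  refine HasCompactSupport.intro (isCompact_closedBall (0 : EuclideanSpace ℝ (Fin n)) 1) ?_
  intro z hz
  apply tirq_zero
  simp at hz; exact hz.le

lemma tirq_contDiff (k : ℕ) : ContDiff ℝ 1 (tirq (k+2) : EuclideanSpace ℝ (Fin n) → ℝ) := by
  unfold tirq; exact (tirp_contDiff1 k).comp (contDiff_const.sub (contDiff_norm_sq ℝ))

lemma tirq_fderiv (k : ℕ) (z v : EuclideanSpace ℝ (Fin n)) :
    fderiv ℝ (tirq (k+2)) z v = - (2*(k+2)) * tirq (k+1) z * inner ℝ z v := by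
  have h1 : HasFDerivAt (fun z : EuclideanSpace ℝ (Fin n) => 1 - ‖z‖^2) (0 - 2 • (innerSL ℝ z)) z :=
    (hasFDerivAt_const _ _).sub (hasStrictFDerivAt_norm_sq z).hasFDerivAt
  have h2 := (tirp_deriv k (1 - ‖z‖^2)).comp_hasFDerivAt z h1
  have h3 : fderiv ℝ (tirq (k+2)) z = _ := h2.fderiv
  rw [h3]
  simp [tirq]
  ring

lemma tirq_fderiv_le (k : ℕ) (z v : EuclideanSpace ℝ (Fin n)) :
    |fderiv ℝ (tirq (k+2)) z v| ≤ (2*(k+2)) * ‖v‖ := by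
  rw [tirq_fderiv]
  rcases le_total 1 ‖z‖ with h | h
  · rw [tirq_zero k z h]; simp; positivity
  · rw [abs_mul, abs_mul, abs_neg, abs_of_nonneg (by positivity : (0:ℝ) ≤ 2*(k+2)), abs_of_nonneg (tirq_nonneg _ _)]
    have h1 := tirq_le_one (k+1) z
    have h2 : |inner ℝ z v| ≤ ‖v‖ := (abs_real_inner_le_norm z v).trans (by nlinarith [norm_nonneg v])
    have h3 : (0:ℝ) ≤ 2*(k+2) := by positivity
    calc _ ≤ 2*((k:ℝ)+2) * 1 * ‖v‖ := by gcongr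
      _ = _ := by ring

lemma tirq_fderiv_zero (k : ℕ) (z v : EuclideanSpace ℝ (Fin n)) (h : 1 ≤ ‖z‖) :
    fderiv ℝ (tirq (k+2)) z v = 0 := by
  rw [tirq_fderiv, tirq_zero k z h]; simp

lemma tirq_fderiv_cont (k : ℕ) (v : EuclideanSpace ℝ (Fin n)) :
    Continuous (fun z => fderiv ℝ (tirq (k+2)) z v) := by
  exact ((tirq_contDiff k).continuous_fderiv (by norm_num)).clm_apply continuous_const

lemma tir_int (g h : EuclideanSpace ℝ (Fin n) → ℝ) (hg : Continuous g) (hh : Continuous h)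
    (h0 : ∀ z, 1 ≤ ‖z‖ → h z = 0) : Integrable (fun z => g z * h z) := by
  refine (hg.mul hh).integrable_of_hasCompactSupport ?_
  refine HasCompactSupport.intro (isCompact_closedBall (0 : EuclideanSpace ℝ (Fin n)) 1) ?_
  intro z hz
  simp at hz
  simp [h0 z hz.le]

lemma tir_ibp (k : ℕ) (g : EuclideanSpace ℝ (Fin n) → ℝ) (hg : ContDiff ℝ 1 g) (v : EuclideanSpace ℝ (Fin n)) :
    ∫ z, g z * fderiv ℝ (tirq (k+2)) z v = - ∫ z, fderiv ℝ g z v * tirq (k+2) z := by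
  refine integral_mul_fderiv_eq_neg_fderiv_mul_of_integrable ?_ ?_ ?_ ?_ ?_
  · exact tir_int _ _ ((hg.continuous_fderiv (by norm_num)).clm_apply continuous_const) (tirq_cont _)
      (fun z hz => tirq_zero _ z hz)
  · exact tir_int _ _ hg.continuous (tirq_fderiv_cont k v) (fun z hz => tirq_fderiv_zero _ z v hz)
  · exact tir_int _ _ hg.continuous (tirq_cont _) (fun z hz => tirq_zero _ z hz)
  · intro x _; exact (hg.differentiable (by norm_num)) x
  · intro x _; exact ((tirq_contDiff k).differentiable (by norm_num)) x

lemma tir_fderiv_scale (U : EuclideanSpace ℝ (Fin n) → ℝ) (hU : Differentiable ℝ U)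
    (x z v : EuclideanSpace ℝ (Fin n)) (R : ℝ) :
    fderiv ℝ (fun z => U (x + R • z)) z v = R * fderiv ℝ U (x + R • z) v := by
  have h1 : HasFDerivAt (fun z : EuclideanSpace ℝ (Fin n) => x + R • z) (R • ContinuousLinearMap.id ℝ _) z :=
    ((hasFDerivAt_id z).const_smul R).const_add x
  have h2 := (hU (x + R • z)).hasFDerivAt.comp z h1
  have h3 : fderiv ℝ (fun z => U (x + R • z)) z = _ := h2.fderiv
  rw [h3]; simp

lemma tir_A_deriv (U : EuclideanSpace ℝ (Fin n) → ℝ) (hU : ContDiff ℝ 2 U)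
    (x : EuclideanSpace ℝ (Fin n)) (R : ℝ) :
    HasDerivAt (fun R : ℝ => ∫ z, U (x + R • z) * (8 * tirq 3 z))
      (R * ∫ z, lap n U (x + R • z) * tirq 4 z) R := by
  have hU1 : ContDiff ℝ 1 U := hU.of_le (by norm_num)
  have hUd : Differentiable ℝ U := hU1.differentiable (by norm_num)
  have hfc : Continuous (fderiv ℝ U) := hU1.continuous_fderiv (by norm_num)
  have hq : Continuous (fun z : EuclideanSpace ℝ (Fin n) => 8 * tirq 3 z) := continuous_const.mul (tirq_cont _)
  have hq0 : ∀ z : EuclideanSpace ℝ (Fin n), 1 ≤ ‖z‖ → 8 * tirq 3 z = 0 := by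
    intro z hz; rw [tirq_zero 2 z hz]; simp
  obtain ⟨K, hK⟩ : ∃ K, ∀ s ∈ closedBall R 1, ∀ z ∈ closedBall (0:EuclideanSpace ℝ (Fin n)) 1, ‖fderiv ℝ U (x + s • z) z‖ ≤ K := by
    have hc : Continuous (fun p : ℝ × EuclideanSpace ℝ (Fin n) => fderiv ℝ U (x + p.1 • p.2) p.2) := by
      exact (hfc.comp (by fun_prop)).clm_apply continuous_snd
    obtain ⟨K, hK⟩ := ((isCompact_closedBall R 1).prod (isCompact_closedBall (0:EuclideanSpace ℝ (Fin n)) 1)).exists_bound_of_continuousOn hc.continuousOn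
    exact ⟨K, fun s hs z hz => hK (s, z) ⟨hs, hz⟩⟩
  have main := hasDerivAt_integral_of_dominated_loc_of_deriv_le (μ := volume)
    (F := fun (R:ℝ) (z : EuclideanSpace ℝ (Fin n)) => U (x + R • z) * (8 * tirq 3 z))
    (F' := fun (R:ℝ) (z : EuclideanSpace ℝ (Fin n)) => fderiv ℝ U (x + R • z) z * (8 * tirq 3 z))
    (bound := fun z => K * (8 * tirq 3 z)) (x₀ := R) (ball_mem_nhds R one_pos)
    (Eventually.of_forall fun s => ((hU.continuous.comp (by fun_prop)).mul hq).aestronglyMeasurable)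
    (tir_int _ _ (hU.continuous.comp (by fun_prop)) hq hq0)
    ((((hfc.comp (by fun_prop)).clm_apply continuous_id).mul hq).aestronglyMeasurable)
    (by
      refine Eventually.of_forall fun z s hs => ?_
      rcases le_total 1 ‖z‖ with h | h
      · simp only [hq0 z h, mul_zero, norm_zero, le_refl]
      · rw [norm_mul, Real.norm_of_nonneg (by have := tirq_nonneg 3 z; positivity : 0 ≤ 8 * tirq 3 z)]
        refine mul_le_mul_of_nonneg_right (hK s (ball_subset_closedBall hs) z (by simpa using h)) ?_
        have := tirq_nonneg 3 z; positivity)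
    (tir_int _ _ continuous_const hq hq0)
    (by
      refine Eventually.of_forall fun z s hs => ?_
      have h1 : HasDerivAt (fun s : ℝ => x + s • z) z s := by
        simpa using ((hasDerivAt_id s).smul_const z).const_add x
      exact ((hUd (x + s • z)).hasFDerivAt.comp_hasDerivAt s h1).mul_const _)
  refine main.2.congr_deriv (Eq.symm ?_)
  have hdi : ∀ i : Fin n, ContDiff ℝ 1 (fun y => fderiv ℝ U y (EuclideanSpace.single i (1:ℝ))) := by
    intro i
    exact (hU.fderiv_right (m := 1) (by norm_num)).clm_apply contDiff_const
  have e1 : ∀ z, fderiv ℝ U (x + R • z) z * (8 * tirq 3 z)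
      = ∑ i : Fin n, -(fderiv ℝ U (x + R • z) (EuclideanSpace.single i (1:ℝ)) * fderiv ℝ (tirq 4) z (EuclideanSpace.single i (1:ℝ))) := by
    intro z
    have hz : z = ∑ i : Fin n, z i • EuclideanSpace.single i (1:ℝ) := by
      ext j; simp [Finset.sum_apply, Pi.single_apply]
    have : fderiv ℝ U (x + R • z) z = ∑ i : Fin n, z i * fderiv ℝ U (x + R • z) (EuclideanSpace.single i (1:ℝ)) := by
      conv_lhs => arg 2; rw [hz]
      simp
    rw [this, Finset.sum_mul]
    refine Finset.sum_congr rfl fun i _ => ?_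
    rw [tirq_fderiv, EuclideanSpace.inner_single_right]
    simp
    ring
  have hgi : ∀ i : Fin n, ContDiff ℝ 1 (fun z : EuclideanSpace ℝ (Fin n) => fderiv ℝ U (x + R • z) (EuclideanSpace.single i (1:ℝ))) := by
    intro i; exact (hdi i).comp (contDiff_const.add (contDiff_id.const_smul R))
  refine Eq.trans ?_ (integral_congr_ae (Eventually.of_forall e1)).symm
  rw [integral_finsetSum Finset.univ (f := fun (i : Fin n) a => -(fderiv ℝ U (x + R • a) (EuclideanSpace.single i (1:ℝ)) * fderiv ℝ (tirq 4) a (EuclideanSpace.single i (1:ℝ)))) (fun i _ => (tir_int _ _ (hgi i).continuous (tirq_fderiv_cont 2 _) (fun z hz => tirq_fderiv_zero _ z _ hz)).neg)]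
  simp_rw [integral_neg]
  have e2 : ∀ i : Fin n, -∫ z, fderiv ℝ U (x + R • z) (EuclideanSpace.single i (1:ℝ)) * fderiv ℝ (tirq 4) z (EuclideanSpace.single i (1:ℝ))
      = ∫ z, R * (fderiv ℝ (fun y => fderiv ℝ U y (EuclideanSpace.single i (1:ℝ))) (x + R • z) (EuclideanSpace.single i (1:ℝ)) * tirq 4 z) := by
    intro i
    rw [tir_ibp 2 _ (hgi i), neg_neg]
    congr 1; ext z
    rw [tir_fderiv_scale (fun y => fderiv ℝ U y (EuclideanSpace.single i (1:ℝ))) ((hdi i).differentiable (by norm_num))]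
    ring
  simp_rw [e2]
  rw [← integral_finsetSum, ← integral_const_mul]
  · congr 1; ext z
    rw [lap, Finset.sum_mul, Finset.mul_sum]
  · intro i _
    refine Integrable.const_mul (tir_int _ _ ?_ (tirq_cont _) (fun z hz => tirq_zero _ z hz)) R
    exact (((hdi i).continuous_fderiv (by norm_num)).clm_apply continuous_const).comp (by fun_prop)


lemma tir_two_le : (2 : WithTop ℕ∞) ≤ ((⊤ : ℕ∞) : WithTop ℕ∞) := WithTop.coe_le_coe.2 le_top
lemma tir_two_le' : (1 + 1 : WithTop ℕ∞) ≤ ((⊤ : ℕ∞) : WithTop ℕ∞) := WithTop.coe_le_coe.2 le_top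

def tirV (n : ℕ) : ℝ := volume.real (closedBall (0 : EuclideanSpace ℝ (Fin n)) 1)
def tirc (n : ℕ) : ℝ := ∫ z : EuclideanSpace ℝ (Fin n), 8 * tirq 3 z
def tirP (n : ℕ) : ℝ := ∫ z : EuclideanSpace ℝ (Fin n), tirq 4 z

lemma tirq_integral_pos (k : ℕ) : 0 < ∫ z : EuclideanSpace ℝ (Fin n), tirq (k+1) z := by
  refine (tirq_cont (k+1)).integral_pos_of_hasCompactSupport_nonneg_nonzero (tirq_supp k) (fun z => tirq_nonneg _ z) (x := 0) ?_
  simp [tirq, tirp]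

lemma tirP_pos (n : ℕ) : 0 < tirP n := tirq_integral_pos 3
lemma tirc_pos (n : ℕ) : 0 < tirc n := by
  rw [tirc, integral_const_mul]; exact mul_pos (by norm_num) (tirq_integral_pos 2)

lemma tir_intbound (g h : EuclideanSpace ℝ (Fin n) → ℝ) (S H : ℝ)
    (hg : ∀ z, ‖z‖ ≤ 1 → |g z| ≤ S) (hh : ∀ z, |h z| ≤ H) (hS : 0 ≤ S)
    (h0 : ∀ z, 1 ≤ ‖z‖ → h z = 0) : |∫ z, g z * h z| ≤ S * H * tirV n := by
  have : ∫ z, g z * h z = ∫ z in closedBall (0 : EuclideanSpace ℝ (Fin n)) 1, g z * h z := by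
    symm
    apply setIntegral_eq_integral_of_forall_compl_eq_zero
    intro z hz
    simp at hz
    simp [h0 z hz.le]
  rw [this, ← Real.norm_eq_abs]
  refine norm_setIntegral_le_of_norm_le_const (measure_closedBall_lt_top (μ := volume) (x := (0:EuclideanSpace ℝ (Fin n))) (r := 1)) ?_
  intro z hz
  rw [norm_mul]
  exact mul_le_mul (hg z (by simpa using hz)) (hh z) (norm_nonneg _) hS

lemma tirP_le (n : ℕ) : tirP n ≤ tirV n := by
  have := tir_intbound (n := n) (fun _ => 1) (tirq 4) 1 1 (by simp) (fun z => by
    rw [abs_of_nonneg (tirq_nonneg _ _)]; exact tirq_le_one _ _) zero_le_one (fun z hz => tirq_zero _ z hz)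
  simp at this
  exact (le_abs_self _).trans this

lemma tirc_le (n : ℕ) : tirc n ≤ 8 * tirV n := by
  have := tir_intbound (n := n) (fun _ => 8) (tirq 3) 8 1 (by simp) (fun z => by
    rw [abs_of_nonneg (tirq_nonneg _ _)]; exact tirq_le_one _ _) (by norm_num) (fun z hz => tirq_zero _ z hz)
  simp only [mul_one] at this
  exact (le_abs_self _).trans this

lemma tirV_pos (n : ℕ) : 0 < tirV n := (tirP_pos n).trans_le (tirP_le n)

lemma tir_A_mvt (U : EuclideanSpace ℝ (Fin n) → ℝ) (hU : ContDiff ℝ 2 U)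
    (x : EuclideanSpace ℝ (Fin n)) (R : ℝ) (hR : 0 < R) :
    ∃ s, 0 < s ∧ s < R ∧ ∫ z, U (x + R • z) * (8 * tirq 3 z) = tirc n * U x +
      R * (s * ∫ z, lap n U (x + s • z) * tirq 4 z) := by
  have hd := fun s => tir_A_deriv U hU x s
  obtain ⟨s, hs, h⟩ := exists_hasDerivAt_eq_slope _ _ hR
    (HasDerivAt.continuousOn fun s _ => hd s) (fun s _ => hd s)
  refine ⟨s, hs.1, hs.2, ?_⟩
  rw [h]
  have : ∫ z, U (x + (0:ℝ) • z) * (8 * tirq 3 z) = tirc n * U x := by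
    simp only [zero_smul, add_zero]
    rw [integral_const_mul, tirc, mul_comm]
  rw [this, sub_zero, mul_div_cancel₀ _ hR.ne']
  ring

lemma tir_L2 (U : EuclideanSpace ℝ (Fin n) → ℝ) (hU : ContDiff ℝ 2 U)
    (x : EuclideanSpace ℝ (Fin n)) (R K : ℝ) (hR : 0 < R) (hK : ∀ y, -K ≤ lap n U y) :
    ∃ s, 0 < s ∧ s < R ∧ tirc n * U x - K * R * s * tirP n ≤ ∫ z, U (x + R • z) * (8 * tirq 3 z) := by
  obtain ⟨s, h0, h1, h⟩ := tir_A_mvt U hU x R hR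
  refine ⟨s, h0, h1, ?_⟩
  rw [h]
  have hlc : Continuous (lap n U) := by
    unfold lap
    refine continuous_finsetSum _ fun i _ => ?_
    have : ContDiff ℝ 1 (fun y => fderiv ℝ U y (EuclideanSpace.single i (1:ℝ))) :=
      (hU.fderiv_right (m := 1) (by norm_num)).clm_apply contDiff_const
    exact (this.continuous_fderiv (by norm_num)).clm_apply continuous_const
  have h3 : ∫ z : EuclideanSpace ℝ (Fin n), (-K) * tirq 4 z ≤ ∫ z, lap n U (x + s • z) * tirq 4 z := by
    refine integral_mono (tir_int _ _ continuous_const (tirq_cont _) (fun z hz => tirq_zero _ z hz))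
      (tir_int _ _ (hlc.comp (by fun_prop)) (tirq_cont _) (fun z hz => tirq_zero _ z hz)) ?_
    intro z
    exact mul_le_mul_of_nonneg_right (hK _) (tirq_nonneg _ _)
  rw [integral_const_mul] at h3
  have h4 := mul_le_mul_of_nonneg_left h3 (mul_pos hR h0).le
  rw [← tirP] at h4
  nlinarith

/-- smooth eigenfunction -/
def TirEig (n : ℕ) (lam : ℝ) (u : EuclideanSpace ℝ (Fin n) → ℝ) : Prop :=
  ContDiff ℝ (⊤ : ℕ∞) u ∧ ∀ x, lap n u x = -lam * u x

/-- directional derivative -/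
def tirD (v : EuclideanSpace ℝ (Fin n)) (u : EuclideanSpace ℝ (Fin n) → ℝ) : EuclideanSpace ℝ (Fin n) → ℝ :=
  fun y => fderiv ℝ u y v

lemma tirD_smooth (v : EuclideanSpace ℝ (Fin n)) (u : EuclideanSpace ℝ (Fin n) → ℝ)
    (hu : ContDiff ℝ (⊤ : ℕ∞) u) : ContDiff ℝ (⊤ : ℕ∞) (tirD v u) := by
  unfold tirD
  exact (hu.fderiv_right (m := (⊤ : ℕ∞)) (by norm_num)).clm_apply contDiff_const

lemma tirD_comm (v w : EuclideanSpace ℝ (Fin n)) (u : EuclideanSpace ℝ (Fin n) → ℝ)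
    (hu : ContDiff ℝ (⊤ : ℕ∞) u) : tirD v (tirD w u) = tirD w (tirD v u) := by
  have hd : Differentiable ℝ (fderiv ℝ u) := (hu.fderiv_right (m := 1) tir_two_le').differentiable (by norm_num)
  have key : ∀ a b x, tirD a (tirD b u) x = fderiv ℝ (fderiv ℝ u) x a b := by
    intro a b x
    unfold tirD
    rw [fderiv_clm_apply (hd x) (by fun_prop)]
    simp
  ext x
  rw [key, key]
  have hs : IsSymmSndFDerivAt ℝ u x := (hu.contDiffAt).isSymmSndFDerivAt (by simpa using tir_two_le)
  exact hs.eq v w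

lemma tirD_eig (lam : ℝ) (v : EuclideanSpace ℝ (Fin n)) (u : EuclideanSpace ℝ (Fin n) → ℝ)
    (hu : TirEig n lam u) : TirEig n lam (tirD v u) := by
  refine ⟨tirD_smooth v u hu.1, fun x => ?_⟩
  have h1 : ∀ i : Fin n, fderiv ℝ (fun y => fderiv ℝ (tirD v u) y (EuclideanSpace.single i (1:ℝ))) x
      (EuclideanSpace.single i (1:ℝ)) = tirD v (tirD (EuclideanSpace.single i (1:ℝ)) (tirD (EuclideanSpace.single i (1:ℝ)) u)) x := by
    intro i
    rw [tirD_comm _ _ _ (tirD_smooth _ _ hu.1), tirD_comm v _ u hu.1]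
    rfl
  have h2 : lap n u = fun y => ∑ i : Fin n, tirD (EuclideanSpace.single i (1:ℝ)) (tirD (EuclideanSpace.single i (1:ℝ)) u) y := rfl
  have h3 : tirD v (lap n u) x = ∑ i : Fin n, tirD v (tirD (EuclideanSpace.single i (1:ℝ)) (tirD (EuclideanSpace.single i (1:ℝ)) u)) x := by
    rw [h2]
    unfold tirD
    rw [fderiv_fun_sum]
    · simp
    · intro i _
      exact ((tirD_smooth _ _ (tirD_smooth _ _ hu.1)).differentiable (by simp)) x
  rw [lap, Finset.sum_congr rfl (fun i _ => h1 i), ← h3]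
  have h4 : lap n u = fun y => -lam * u y := funext hu.2
  rw [h4]
  unfold tirD
  rw [fderiv_const_mul (hu.1.differentiable (by simp) x)]
  simp

def tirC1 (n : ℕ) : ℝ := 56 * tirV n / tirc n

lemma tirC1_ge (n : ℕ) : 1 ≤ tirC1 n := by
  unfold tirC1
  rw [le_div_iff₀ (tirc_pos n)]
  have := tirc_le n
  have := tirV_pos n
  linarith

lemma tir_L3 (lam : ℝ) (hlam : 0 ≤ lam) (u : EuclideanSpace ℝ (Fin n) → ℝ) (hu : TirEig n lam u)
    (x v : EuclideanSpace ℝ (Fin n)) (R S : ℝ) (hR : 0 < R) (hlR : lam * R^2 ≤ 1)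
    (hS : ∀ y ∈ closedBall x R, |u y| ≤ S) : |tirD v u x| ≤ tirC1 n * (‖v‖ / R) * S := by
  have hS0 : 0 ≤ S := (abs_nonneg _).trans (hS x (mem_closedBall_self hR.le))
  have hv := tirD_eig lam v u hu
  obtain ⟨s, h0, h1, h⟩ := tir_A_mvt (tirD v u) (hv.1.of_le tir_two_le) x R hR
  have hud : Differentiable ℝ u := hu.1.differentiable (by simp)
  have hsc : ∀ r : ℝ, ContDiff ℝ 1 (fun z : EuclideanSpace ℝ (Fin n) => u (x + r • z)) := by
    intro r
    exact (hu.1.of_le (by exact_mod_cast le_top)).comp (contDiff_const.add (contDiff_id.const_smul r))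
  have hin : ∀ r, 0 < r → r ≤ R → ∀ z : EuclideanSpace ℝ (Fin n), ‖z‖ ≤ 1 → |u (x + r • z)| ≤ S := by
    intro r hr0 hr z hz
    apply hS
    simp [norm_smul, abs_of_pos hr0]
    nlinarith [norm_nonneg z]
  have hI : ∀ (k : ℕ) (r : ℝ), 0 < r → r ≤ R → |∫ z, r * tirD v u (x + r • z) * tirq (k+2) z| ≤ S * (2*(k+2) * ‖v‖) * tirV n := by
    intro k r hr0 hr
    have e := tir_ibp k _ (hsc r) v
    have : ∫ z, r * tirD v u (x + r • z) * tirq (k+2) z = - ∫ z, u (x + r • z) * fderiv ℝ (tirq (k+2)) z v := by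
      rw [e, neg_neg]
      congr 1; ext z
      rw [tir_fderiv_scale u hud]; rfl
    rw [this, abs_neg]
    exact tir_intbound _ _ _ _ (hin r hr0 hr) (fun z => tirq_fderiv_le k z v) hS0 (fun z hz => tirq_fderiv_zero k z v hz)
  have hA := hI 1 R hR le_rfl
  have hB := hI 2 s h0 h1.le
  have eA : R * ∫ z, tirD v u (x + R • z) * (8 * tirq 3 z) = 8 * ∫ z, R * tirD v u (x + R • z) * tirq (1+2) z := by
    rw [← integral_const_mul, ← integral_const_mul]
    congr 1; ext z; ring
  have eB : s * ∫ z, lap n (tirD v u) (x + s • z) * tirq 4 z = - lam * ∫ z, s * tirD v u (x + s • z) * tirq (2+2) z := by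
    rw [← integral_const_mul, ← integral_const_mul]
    congr 1; ext z; rw [hv.2]; ring
  rw [eB] at h
  rw [h] at eA
  generalize (∫ z, R * tirD v u (x + R • z) * tirq (1+2) z) = a at *
  generalize (∫ z, s * tirD v u (x + s • z) * tirq (2+2) z) = b at *
  have hc := tirc_pos n
  have e3 : R * (tirc n * tirD v u x) = 8 * a + lam * R^2 * b := by linarith
  have hb : |lam * R^2 * b| ≤ |b| := by
    rw [abs_mul, abs_of_nonneg (by positivity)]
    nlinarith [abs_nonneg b]
  have e4 : R * tirc n * |tirD v u x| ≤ 56 * S * ‖v‖ * tirV n := by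
    calc R * tirc n * |tirD v u x| = |R * (tirc n * tirD v u x)| := by
          rw [abs_mul, abs_mul, abs_of_pos hR, abs_of_pos hc]; ring
      _ ≤ 8 * |a| + |b| := by
          rw [e3]; refine (abs_add_le _ _).trans ?_
          rw [abs_mul (8:ℝ), abs_of_pos (by norm_num : (0:ℝ) < 8)]; linarith
      _ ≤ _ := by push_cast at hA hB; linarith
  unfold tirC1
  rw [show 56 * tirV n / tirc n * (‖v‖ / R) * S = (56 * S * ‖v‖ * tirV n) / (R * tirc n) by field_simp,
    le_div_iff₀ (by positivity)]
  linarith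


lemma tirD_iter_smooth (v : EuclideanSpace ℝ (Fin n)) (k : ℕ) : ∀ (u : EuclideanSpace ℝ (Fin n) → ℝ),
    ContDiff ℝ (⊤ : ℕ∞) u → ContDiff ℝ (⊤ : ℕ∞) ((tirD v)^[k] u) := by
  induction k with
  | zero => intro u hu; exact hu
  | succ k ih => intro u hu; exact ih _ (tirD_smooth v u hu)

lemma tir_line_smooth (x v : EuclideanSpace ℝ (Fin n)) (u : EuclideanSpace ℝ (Fin n) → ℝ)
    (hu : ContDiff ℝ (⊤ : ℕ∞) u) : ContDiff ℝ (⊤ : ℕ∞) (fun s : ℝ => u (x + s • v)) :=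
  hu.comp (contDiff_const.add (contDiff_id.smul contDiff_const))

lemma tir_iterD (x v : EuclideanSpace ℝ (Fin n)) (k : ℕ) : ∀ (u : EuclideanSpace ℝ (Fin n) → ℝ),
    ContDiff ℝ (⊤ : ℕ∞) u → ∀ s : ℝ, iteratedDeriv k (fun s : ℝ => u (x + s • v)) s = (tirD v)^[k] u (x + s • v) := by
  induction k with
  | zero => intro u hu s; simp
  | succ k ih =>
    intro u hu s
    rw [iteratedDeriv_succ', Function.iterate_succ_apply, ← ih _ (tirD_smooth v u hu)]
    congr 1
    ext t
    have h1 : HasDerivAt (fun s : ℝ => x + s • v) v t := by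
      simpa using ((hasDerivAt_id t).smul_const v).const_add x
    exact ((hu.differentiable (by simp) (x + t • v)).hasFDerivAt.comp_hasDerivAt t h1).deriv

lemma tir_L4 (lam : ℝ) (hlam : 0 ≤ lam) (v : EuclideanSpace ℝ (Fin n)) (r : ℝ) (hr : 0 < r) (hlr : lam * r^2 ≤ 1)
    (k : ℕ) : ∀ (u : EuclideanSpace ℝ (Fin n) → ℝ), TirEig n lam u → ∀ (x : EuclideanSpace ℝ (Fin n)) (S : ℝ),
    (∀ y ∈ closedBall x (k * r), |u y| ≤ S) → |(tirD v)^[k] u x| ≤ (tirC1 n * (‖v‖ / r))^k * S := by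
  induction k with
  | zero => intro u hu x S hS; simpa using hS x (by simp)
  | succ k ih =>
    intro u hu x S hS
    rw [Function.iterate_succ_apply, pow_succ, mul_assoc]
    refine ih _ (tirD_eig lam v u hu) x _ ?_
    intro y hy
    refine tir_L3 lam hlam u hu y v r S hr hlr ?_
    intro z hz
    apply hS
    rw [mem_closedBall] at *
    have := dist_triangle z y x
    push_cast
    linarith

lemma tir_vol_affine (p a : EuclideanSpace ℝ (Fin n)) (t b : ℝ) (ht : t ≠ 0) (F : Set (EuclideanSpace ℝ (Fin n))) :
    volume.real {w | w ∈ ball a b ∧ p + t • w ∈ F} * |t|^n = volume.real (F ∩ ball (p + t • a) (|t| * b)) := by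
  have e : {w | w ∈ ball a b ∧ p + t • w ∈ F} = (fun w => t • w) ⁻¹' ((fun w => p + w) ⁻¹' (F ∩ ball (p + t • a) (|t| * b))) := by
    ext w
    simp only [Set.mem_ofPred_eq, Set.mem_preimage, Set.mem_inter_iff, mem_ball, dist_add_left, dist_smul₀, Real.norm_eq_abs]
    rw [mul_lt_mul_iff_right₀ (abs_pos.2 ht)]
    tauto
  rw [e, Measure.real, Measure.addHaar_preimage_smul _ ht, measure_preimage_add, ENNReal.toReal_mul, Measure.real]
  rw [ENNReal.toReal_ofReal (abs_nonneg _)]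
  simp only [finrank_euclideanSpace, Fintype.card_fin, abs_inv, abs_pow]
  have : |t|^n ≠ 0 := pow_ne_zero _ (abs_ne_zero.2 ht)
  field_simp

lemma tir_vol_ball (a : EuclideanSpace ℝ (Fin n)) (b : ℝ) (hb : 0 < b) : volume.real (ball a b) = b^n * tirV n := by
  rw [tirV, Measure.real, Measure.real, Measure.addHaar_ball_of_pos _ _ hb, ENNReal.toReal_mul, ENNReal.toReal_ofReal (by positivity),
    Measure.addHaar_closedBall _ _ zero_le_one]
  simp

lemma tir_avg (F : Set (EuclideanSpace ℝ (Fin n))) (hF : IsOpen F) (x a : EuclideanSpace ℝ (Fin n)) (b : ℝ) (hb : 0 < b)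
    (T : Finset ℤ) (t : ℤ → ℝ) (ht : ∀ j ∈ T, t j ≠ 0) (W : ℤ → ℝ)
    (hW : ∀ j ∈ T, volume.real (F ∩ ball (x + t j • (a - x)) (|t j| * b)) ≤ W j * (|t j|^n * (b^n * tirV n))) :
    ∃ w ∈ ball a b, ∃ Bad : Finset ℤ, Bad ⊆ T ∧ (Bad.card : ℝ) ≤ ∑ j ∈ T, W j ∧
      ∀ j ∈ T, j ∉ Bad → x + t j • (w - x) ∉ F := by
  classical
  set B : ℤ → Set (EuclideanSpace ℝ (Fin n)) := fun j => {w | x + t j • (w - x) ∈ F} with hB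
  have hBo : ∀ j, IsOpen (B j) := fun j => hF.preimage (by fun_prop)
  set f : EuclideanSpace ℝ (Fin n) → ℝ := fun w => ∑ j ∈ T, (B j).indicator (fun _ => (1:ℝ)) w with hf
  have hVb := tir_vol_ball a b hb
  have hVp : 0 < volume.real (ball a b) := by rw [hVb]; have := tirV_pos n; positivity
  have hfin : volume (ball a b) ≠ ⊤ := measure_ball_lt_top.ne
  have hne : volume (ball a b) ≠ 0 := by
    intro h; rw [Measure.real, h] at hVp; simp at hVp
  have hint : ∀ j ∈ T, IntegrableOn ((B j).indicator (fun _ => (1:ℝ))) (ball a b) := by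
    intro j _
    exact (integrableOn_const hfin).indicator (hBo j).measurableSet
  obtain ⟨w, hw, hwle⟩ := exists_le_setAverage (f := f) hne hfin (integrable_finsetSum _ hint)
  refine ⟨w, hw, T.filter (fun j => w ∈ B j), Finset.filter_subset _ _, ?_, ?_⟩
  · have h1 : f w = ((T.filter (fun j => w ∈ B j)).card : ℝ) := by
      simp only [hf, Set.indicator_apply]
      rw [Finset.sum_ite]; simp
    rw [← h1]
    refine hwle.trans ?_
    rw [setAverage_eq, smul_eq_mul, inv_mul_le_iff₀ hVp, hf, integral_finsetSum _ hint, Finset.mul_sum]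
    refine Finset.sum_le_sum fun j hj => ?_
    rw [setIntegral_indicator (hBo j).measurableSet, setIntegral_const, smul_eq_mul, mul_one]
    have h2 := tir_vol_affine (x - t j • x) a (t j) b (ht j hj) F
    have e1 : ∀ w, x - t j • x + t j • w = x + t j • (w - x) := by intro w; rw [smul_sub]; abel
    simp only [e1] at h2
    have h3 := hW j hj
    rw [← h2] at h3
    have hp : 0 < |t j|^n := pow_pos (abs_pos.2 (ht j hj)) _
    have e2 : ball a b ∩ B j = {w | w ∈ ball a b ∧ x + t j • (w - x) ∈ F} := rfl
    rw [e2, hVb]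
    refine le_of_mul_le_mul_right ?_ hp
    linarith
  · intro j hj hjB hmem
    exact hjB (Finset.mem_filter.2 ⟨hj, hmem⟩)


def tirphi (t : ℝ) : ℝ := 8 * tirp 3 (t - 1/2)

lemma tirphi_contDiff : ContDiff ℝ 2 tirphi := by
  unfold tirphi
  exact contDiff_const.mul ((tirp_contDiff2 0).comp (contDiff_id.sub contDiff_const))

lemma tirphi_deriv (t : ℝ) : HasDerivAt tirphi (24 * tirp 2 (t - 1/2)) t := by
  have h := ((tirp_deriv 1 (t - 1/2)).comp t ((hasDerivAt_id t).sub_const (1/2))).const_mul 8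
  have h2 : HasDerivAt tirphi _ t := h
  convert h2 using 1
  push_cast; ring

lemma tirphi_deriv2 (t : ℝ) : HasDerivAt (fun t => 24 * tirp 2 (t - 1/2)) (48 * tirp 1 (t - 1/2)) t := by
  have h := ((tirp_deriv 0 (t - 1/2)).comp t ((hasDerivAt_id t).sub_const (1/2))).const_mul 24
  have h2 : HasDerivAt (fun t => 24 * tirp 2 (t - 1/2)) _ t := h
  convert h2 using 1
  push_cast; ring

lemma tirphi_zero {t : ℝ} (h : t ≤ 1/2) : tirphi t = 0 := by
  unfold tirphi; rw [tirp_of_nonpos 2 (by linarith)]; simp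

lemma tirphi_nonneg (t : ℝ) : 0 ≤ tirphi t := mul_nonneg (by norm_num) (tirp_nonneg _ _)

lemma tirphi_one : tirphi 1 = 1 := by
  unfold tirphi tirp; norm_num

lemma tirphi_le {t : ℝ} (h : t ≤ 1) : tirphi t ≤ 1 := by
  have : max (t - 1/2) 0 ≤ 1/2 := max_le (by linarith) (by norm_num)
  have h2 : (max (t - 1/2) 0)^3 ≤ (1/2)^3 := pow_le_pow_left₀ (le_max_right _ _) this 3
  unfold tirphi tirp; linarith

lemma tir_lap_congr {U W : EuclideanSpace ℝ (Fin n) → ℝ} {y : EuclideanSpace ℝ (Fin n)}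
    (h : U =ᶠ[nhds y] W) : lap n U y = lap n W y := by
  unfold lap
  refine Finset.sum_congr rfl fun i _ => ?_
  have : (fun y => fderiv ℝ U y (EuclideanSpace.single i (1:ℝ))) =ᶠ[nhds y] (fun y => fderiv ℝ W y (EuclideanSpace.single i (1:ℝ))) := by
    filter_upwards [h.fderiv (𝕜 := ℝ)] with z hz
    rw [hz]
  rw [this.fderiv_eq]

lemma tir_lap_phi (lam : ℝ) (u : EuclideanSpace ℝ (Fin n) → ℝ) (hu : TirEig n lam u) (y : EuclideanSpace ℝ (Fin n)) :
    24 * tirp 2 (u y - 1/2) * (-lam * u y) ≤ lap n (fun x => tirphi (u x)) y := by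
  have hud : Differentiable ℝ u := hu.1.differentiable (by simp)
  rw [← hu.2]
  unfold lap
  rw [Finset.mul_sum]
  refine Finset.sum_le_sum fun i _ => ?_
  set e := EuclideanSpace.single i (1:ℝ)
  have h1 : (fun z => fderiv ℝ (fun x => tirphi (u x)) z e) = fun z => 24 * tirp 2 (u z - 1/2) * fderiv ℝ u z e := by
    ext z
    have := (tirphi_deriv (u z)).comp_hasFDerivAt z (hud z).hasFDerivAt
    have h2 : fderiv ℝ (fun x => tirphi (u x)) z = _ := this.fderiv
    rw [h2]; simp
  rw [h1]
  have h3 : HasFDerivAt (fun z => 24 * tirp 2 (u z - 1/2)) _ y := (tirphi_deriv2 (u y)).comp_hasFDerivAt y (hud y).hasFDerivAt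
  have h4 : HasFDerivAt (fun z => fderiv ℝ u z e) _ y := ((tirD_smooth e u hu.1).differentiable (by simp) y).hasFDerivAt
  have h5 := (h3.mul h4).fderiv
  have h6 : fderiv ℝ (fun z => 24 * tirp 2 (u z - 1/2) * fderiv ℝ u z e) y = _ := h5
  rw [h6]
  simp only [_root_.add_apply, _root_.smul_apply, smul_eq_mul]
  have h7 : 0 ≤ fderiv ℝ u y e * (48 * tirp 1 (u y - 1/2) * fderiv ℝ u y e) := by
    have := tirp_nonneg 1 (u y - 1/2)
    nlinarith [mul_nonneg this (mul_self_nonneg (fderiv ℝ u y e))]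
  have : fderiv ℝ (tirD e u) y e = fderiv ℝ (fun y => fderiv ℝ u y e) y e := rfl
  rw [this]
  linarith

lemma tir_volume (lam : ℝ) (hlam : 0 < lam) (u : EuclideanSpace ℝ (Fin n) → ℝ) (hu : TirEig n lam u)
    (x0 : EuclideanSpace ℝ (Fin n)) (h0 : u x0 = 1)
    (hmax : ∀ y ∈ connectedComponentIn {y | u y ≠ 0} x0, u y ≤ 1) (ρ : ℝ) (hρ : 0 < ρ) :
    volume.real ({y | 1 < |u y|} ∩ ball x0 ρ) ≤ (24 * 2^n) * (lam * ρ^2) * (ρ^n * tirV n) := by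
  classical
  set Ω := connectedComponentIn {y | u y ≠ 0} x0 with hΩ
  set F := {y | 1 < |u y|} with hF
  have huc : Continuous u := hu.1.continuous
  have hud : Differentiable ℝ u := hu.1.differentiable (by simp)
  have hopen : IsOpen {y | u y ≠ 0} := isOpen_ne.preimage huc
  have hΩo : IsOpen Ω := hopen.connectedComponentIn
  have hx0 : x0 ∈ Ω := mem_connectedComponentIn (by simp [h0])
  set U : EuclideanSpace ℝ (Fin n) → ℝ := fun y => if y ∈ Ω then tirphi (u y) else 0 with hU
  have hin : ∀ y ∈ Ω, U =ᶠ[nhds y] fun x => tirphi (u x) := by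
    intro y hy
    filter_upwards [hΩo.mem_nhds hy] with z hz
    simp [hU, hz]
  have hout : ∀ y, y ∉ Ω → U =ᶠ[nhds y] fun _ => 0 := by
    intro y hy
    by_cases hy2 : u y < 1/2
    · filter_upwards [(isOpen_Iio.preimage huc).mem_nhds hy2] with z hz
      have : u z ≤ 1/2 := le_of_lt hz
      simp [hU, tirphi_zero this]
    · have hne : u y ≠ 0 := by intro h; rw [h] at hy2; norm_num at hy2
      filter_upwards [(hopen.connectedComponentIn (x := y)).mem_nhds (mem_connectedComponentIn hne)] with z hz
      have : z ∉ Ω := by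
        intro hz2
        apply hy
        have e1 := connectedComponentIn_eq hz
        have e2 := connectedComponentIn_eq hz2
        rw [hΩ, e2, ← e1]
        exact mem_connectedComponentIn hne
      simp [hU, this]
  have hphiu : ContDiff ℝ 2 (fun x => tirphi (u x)) := tirphi_contDiff.comp (hu.1.of_le tir_two_le)
  have hU2 : ContDiff ℝ 2 U := by
    rw [contDiff_iff_contDiffAt]
    intro y
    by_cases hy : y ∈ Ω
    · exact hphiu.contDiffAt.congr_of_eventuallyEq (hin y hy)
    · exact contDiffAt_const.congr_of_eventuallyEq (hout y hy)
  have hlap : ∀ y, -(6*lam) ≤ lap n U y := by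
    intro y
    by_cases hy : y ∈ Ω
    · rw [tir_lap_congr (hin y hy)]
      refine le_trans ?_ (tir_lap_phi lam u hu y)
      have h1 := hmax y hy
      rcases le_total (u y) (1/2) with h | h
      · rw [tirp_of_nonpos 1 (by linarith)]; simp; exact hlam.le
      · have h2 : 24 * tirp 2 (u y - 1/2) ≤ 6 := by
          unfold tirp; rw [max_eq_left (by linarith)]; nlinarith
        have h3 : 0 ≤ 24 * tirp 2 (u y - 1/2) := mul_nonneg (by norm_num) (tirp_nonneg _ _)
        have h4 : lam * u y ≤ lam := by nlinarith
        have h5 : 0 ≤ lam * u y := by nlinarith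
        nlinarith
    · rw [tir_lap_congr (hout y hy)]
      simp [lap]; exact hlam.le
  have hUF : ∀ y, U y ≤ 1 - F.indicator (fun _ => (1:ℝ)) y := by
    intro y
    by_cases hy : y ∈ Ω
    · have h1 := hmax y hy
      by_cases hyF : y ∈ F
      · have h2 : 1 < |u y| := hyF
        have h3 : u y ≤ 1/2 := by
          by_contra hh; push Not at hh
          rw [abs_of_pos (by linarith)] at h2; linarith
        simp [hU, hyF, tirphi_zero h3]
      · simp [hU, hy, hyF]; exact tirphi_le h1
    · by_cases hyF : y ∈ F
      · simp [hU, hy, hyF]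
      · simp [hU, hy, hyF]
  have hFo : IsOpen F := isOpen_Ioi.preimage huc.abs
  obtain ⟨s, hs0, hs1, hs⟩ := tir_L2 U hU2 x0 (2*ρ) (6*lam) (by linarith) hlap
  have hUx0 : U x0 = 1 := by simp [hU, hx0, h0, tirphi_one]
  rw [hUx0, mul_one] at hs
  set G : Set (EuclideanSpace ℝ (Fin n)) := {z | z ∈ ball 0 (1/2) ∧ x0 + (2*ρ) • z ∈ F} with hG
  have hGo : IsOpen G := isOpen_ball.inter (hFo.preimage (by fun_prop))
  have hGfin : volume G ≠ ⊤ := ((measure_mono (fun z hz => hz.1)).trans_lt (measure_ball_lt_top (μ := volume) (x := (0:EuclideanSpace ℝ (Fin n))) (r := 1/2))).ne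
  have hqi : Integrable (fun z : EuclideanSpace ℝ (Fin n) => 8 * tirq 3 z) :=
    tir_int (fun _ => 8) _ continuous_const (tirq_cont 3) (fun z hz => tirq_zero _ z hz)
  have hGi : Integrable (G.indicator (fun _ => (1:ℝ))) := (integrable_indicator_iff hGo.measurableSet).2 (integrableOn_const hGfin)
  have hle : ∫ z, U (x0 + (2*ρ) • z) * (8 * tirq 3 z) ≤ ∫ z, (8 * tirq 3 z - G.indicator (fun _ => (1:ℝ)) z) := by
    refine integral_mono (tir_int _ _ (hU2.continuous.comp (by fun_prop)) (continuous_const.mul (tirq_cont 3)) (fun z hz => by rw [tirq_zero 2 z hz]; simp)) (hqi.sub hGi) ?_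
    intro z
    have h1 := hUF (x0 + (2*ρ) • z)
    have h2 := tirq_nonneg 3 z
    by_cases hz : z ∈ G
    · have h3 : F.indicator (fun _ => (1:ℝ)) (x0 + (2*ρ) • z) = 1 := Set.indicator_of_mem hz.2 _
      have h4 : ‖z‖ < 1/2 := by simpa using hz.1
      have h5 : 1 ≤ 8 * tirq 3 z := by
        have h6 : 3/4 ≤ max (1 - ‖z‖^2) 0 := le_max_of_le_left (by nlinarith [norm_nonneg z])
        have h7 := pow_le_pow_left₀ (by norm_num) h6 3
        unfold tirq tirp; linarith
      simp only [Set.indicator_of_mem hz]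
      rw [h3] at h1
      nlinarith
    · simp only [Set.indicator_of_notMem hz, sub_zero]
      have h3 : U (x0 + (2*ρ) • z) ≤ 1 := h1.trans (by
        have : 0 ≤ F.indicator (fun _ => (1:ℝ)) (x0 + (2*ρ) • z) := Set.indicator_nonneg (fun _ _ => zero_le_one) _
        linarith)
      nlinarith
  rw [integral_sub hqi hGi, integral_indicator hGo.measurableSet, setIntegral_const, smul_eq_mul, mul_one, ← tirc] at hle
  have hGle : volume.real G ≤ 24 * (lam * ρ^2) * tirV n := by
    have h1 : volume.real G ≤ 6*lam * (2*ρ) * s * tirP n := by linarith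
    have h2 := tirP_le n
    have h3 := tirP_pos n
    calc volume.real G ≤ 6*lam * (2*ρ) * s * tirP n := h1
      _ ≤ 6*lam*(2*ρ)*(2*ρ)*tirV n := by gcongr
      _ = _ := by ring
  have hv := tir_vol_affine x0 (0:EuclideanSpace ℝ (Fin n)) (2*ρ) (1/2) (by positivity) F
  rw [smul_zero, add_zero, abs_of_pos (by positivity), show 2*ρ*(1/2) = ρ by ring] at hv
  rw [← hv]
  have : 0 ≤ (2*ρ)^n := by positivity
  calc _ ≤ (24 * (lam * ρ^2) * tirV n) * (2*ρ)^n := mul_le_mul_of_nonneg_right hGle this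
    _ = _ := by rw [mul_pow]; ring


def tirk (n : ℕ) : ℝ := exp (-2) / (4 * tirC1 n)

lemma tirk_pos (n : ℕ) : 0 < tirk n := by
  have := tirC1_ge n; unfold tirk; positivity

lemma tirk_le (n : ℕ) : tirk n ≤ 1/4 := by
  have h := tirC1_ge n
  unfold tirk
  rw [div_le_iff₀ (by positivity)]
  have : exp (-2) ≤ 1 := exp_le_one_iff.2 (by norm_num)
  linarith

lemma tir_fac_bound (B : ℝ) (hB : 0 ≤ B) (M : ℕ) : (B * M)^M / M.factorial ≤ (B * exp 1)^M := by
  have h := Real.pow_div_factorial_le_exp (M:ℝ) (by positivity) M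
  rw [mul_pow, mul_pow, ← exp_nat_mul, mul_one, mul_div_assoc]
  gcongr

lemma tir_cardT (m : ℕ) : ((Finset.Icc (-(m:ℤ)) m).erase 0).card = 2*m := by
  rw [Finset.card_erase_of_mem (by simp), Int.card_Icc]; omega

lemma tir_sumW (m : ℕ) (hm : 1 ≤ m) (θ : ℝ) (hθ : 0 < θ) :
    ∑ j ∈ (Finset.Icc (-(m:ℤ)) m).erase 0, (if |(j:ℝ)/m| ≤ θ then 1 else θ) ≤ 4 * θ * m := by
  classical
  have hmR : (0:ℝ) < m := by exact_mod_cast hm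
  set T := (Finset.Icc (-(m:ℤ)) m).erase 0 with hT
  have hTc : T.card = 2*m := tir_cardT m
  rw [Finset.sum_ite]
  simp only [Finset.sum_const, nsmul_eq_mul, mul_one]
  have h1 : ((T.filter (fun j : ℤ => ¬ |(j:ℝ)/m| ≤ θ)).card : ℝ) ≤ 2*m := by
    exact_mod_cast (Finset.card_filter_le _ _).trans hTc.le
  have h2 : ((T.filter (fun j : ℤ => |(j:ℝ)/m| ≤ θ)).card : ℝ) ≤ 2 * (θ * m) := by
    have hs : T.filter (fun j : ℤ => |(j:ℝ)/m| ≤ θ) ⊆ (Finset.Icc (-((⌊θ*m⌋₊:ℕ):ℤ)) (⌊θ*m⌋₊:ℕ)).erase 0 := by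
      intro j hj
      obtain ⟨hj1, hj2⟩ := Finset.mem_filter.1 hj
      refine Finset.mem_erase.2 ⟨(Finset.mem_erase.1 hj1).1, ?_⟩
      rw [abs_div, Nat.abs_cast, div_le_iff₀ hmR] at hj2
      have : j.natAbs ≤ ⌊θ*m⌋₊ := by
        apply Nat.le_floor
        rw [Nat.cast_natAbs]; push_cast; exact hj2
      rw [Finset.mem_Icc]; omega
    have h3 := (Finset.card_le_card hs).trans (tir_cardT _).le
    have h4 : ((T.filter (fun j : ℤ => |(j:ℝ)/m| ≤ θ)).card : ℝ) ≤ 2 * (⌊θ*m⌋₊:ℝ) := by exact_mod_cast h3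
    have h5 := Nat.floor_le (by positivity : 0 ≤ θ * m)
    linarith
  nlinarith

lemma tir_step (lam : ℝ) (hlam : 0 ≤ lam) (u : EuclideanSpace ℝ (Fin n) → ℝ) (hu : TirEig n lam u)
    (x0 : EuclideanSpace ℝ (Fin n)) (ρ θ A : ℝ) (hρ : 0 < ρ) (hlρ : lam * ρ^2 ≤ 1) (hθ : 0 < θ) (hθ1 : θ ≤ 1/4)
    (hA : ∀ y ∈ ball x0 ρ, |u y| ≤ exp A) (m : ℕ) (hm : 1 ≤ m) (hAm : A ≤ m)
    (hvol : volume.real ({y | 1 < |u y|} ∩ ball x0 ρ) ≤ (tirk n)^n * θ^(n+1) * (ρ^n * tirV n)) :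
    ∀ x ∈ ball x0 (ρ/2), |u x| ≤ (2*m:ℝ)^(4*θ*m+1) + 1 := by
  classical
  intro x hx
  have hmR : (0:ℝ) < m := by exact_mod_cast hm
  have hk := tirk_pos n
  have hk4 := tirk_le n
  have hV := tirV_pos n
  set F := {y | 1 < |u y|} with hF
  have hFo : IsOpen F := isOpen_Ioi.preimage hu.1.continuous.abs
  set T := (Finset.Icc (-(m:ℤ)) m).erase 0 with hT
  have hTc : T.card = 2*m := tir_cardT m
  have hT0 : ∀ j ∈ T, (j:ℝ)/m ≠ 0 := by
    intro j hj
    have : j ≠ 0 := (Finset.mem_erase.1 hj).1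
    exact div_ne_zero (by exact_mod_cast this) hmR.ne'
  have hT1 : ∀ j ∈ T, |(j:ℝ)/m| ≤ 1 := by
    intro j hj
    have h2 : |j| ≤ m := abs_le.2 (Finset.mem_Icc.1 (Finset.mem_erase.1 hj).2)
    rw [abs_div, Nat.abs_cast]
    exact div_le_one_of_le₀ (by exact_mod_cast h2) hmR.le
  rw [mem_ball] at hx
  obtain ⟨w, hw, Bad, hBT, hBc, hgood⟩ := tir_avg F hFo x x (tirk n * ρ) (by positivity) T (fun j => (j:ℝ)/m) hT0
    (fun j => if |(j:ℝ)/m| ≤ θ then 1 else θ) (by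
      intro j hj
      simp only [sub_self, smul_zero, add_zero]
      have ht0 : 0 < |(j:ℝ)/m| := abs_pos.2 (hT0 j hj)
      split_ifs with h
      · have h1 : volume.real (F ∩ ball x (|(j:ℝ)/m| * (tirk n * ρ))) ≤ volume.real (ball x (|(j:ℝ)/m| * (tirk n * ρ))) :=
          measureReal_mono Set.inter_subset_right measure_ball_lt_top.ne
        refine h1.trans (le_of_eq ?_)
        rw [tir_vol_ball _ _ (by positivity), mul_pow]; ring
      · push Not at h
        have h1 : volume.real (F ∩ ball x (|(j:ℝ)/m| * (tirk n * ρ))) ≤ volume.real (F ∩ ball x0 ρ) := by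
          refine measureReal_mono ?_ ((measure_mono Set.inter_subset_right).trans_lt measure_ball_lt_top).ne
          refine Set.inter_subset_inter_right _ (ball_subset_ball' ?_)
          have : |(j:ℝ)/m| * (tirk n * ρ) ≤ 1 * (1/4 * ρ) := by gcongr; exact hT1 j hj
          linarith
        refine (h1.trans hvol).trans ?_
        have h2 : θ^n ≤ |(j:ℝ)/m|^n := pow_le_pow_left₀ hθ.le h.le n
        calc tirk n ^ n * θ ^ (n + 1) * (ρ ^ n * tirV n) = θ * (θ^n * ((tirk n * ρ)^n * tirV n)) := by rw [mul_pow]; ring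
          _ ≤ _ := by gcongr)
  have hsum : ∑ j ∈ T, (if |(j:ℝ)/m| ≤ θ then 1 else θ) ≤ 4 * θ * m := tir_sumW m hm θ hθ
  have hBle : (Bad.card : ℝ) ≤ 4*θ*m := hBc.trans hsum
  have hBm : Bad.card ≤ m := by
    have : (Bad.card : ℝ) ≤ m := hBle.trans (by nlinarith)
    exact_mod_cast this
  set J := T \ Bad with hJ
  have hJc : J.card = 2*m - Bad.card := by rw [hJ, Finset.card_sdiff_of_subset hBT, hTc]
  set M := J.card with hM
  have hMm : m ≤ M := by omega
  have hMpos : (0:ℝ) < M := by exact_mod_cast (by omega : 0 < M)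
  have hvn : ‖w - x‖ < tirk n * ρ := by rw [← dist_eq_norm]; exact hw
  have hC1 := tirC1_ge n
  have key := tir_interp m hm J (Finset.sdiff_subset) (fun s => u (x + s • (w - x))) (tir_line_smooth x (w-x) u hu.1)
    ((4 * tirC1 n * tirk n * M)^M * exp A)
    (by
      intro j hj
      obtain ⟨hj1, hj2⟩ := Finset.mem_sdiff.1 hj
      have := hgood j hj1 hj2
      simpa [hF] using this)
    (by
      intro s hs
      rw [← hM, tir_iterD x (w-x) M u hu.1 s]
      refine (tir_L4 lam hlam (w-x) (ρ/(4*M)) (by positivity) ?_ M u hu (x + s • (w-x)) (exp A) ?_).trans ?_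
      · have : ρ/(4*M) ≤ ρ := by
          apply div_le_self hρ.le
          have : (1:ℝ) ≤ M := by exact_mod_cast (by omega : 1 ≤ M)
          linarith
        calc lam * (ρ/(4*M))^2 ≤ lam * ρ^2 := by gcongr
          _ ≤ 1 := hlρ
      · intro y hy
        apply hA
        rw [mem_closedBall] at hy
        rw [mem_ball]
        have e1 : (M:ℝ) * (ρ/(4*M)) = ρ/4 := by field_simp
        rw [e1] at hy
        have h1 : dist (x + s • (w-x)) x ≤ 1/4 * ρ := by
          rw [dist_eq_norm, add_sub_cancel_left, norm_smul, Real.norm_eq_abs]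
          calc |s| * ‖w - x‖ ≤ 1 * (1/4 * ρ) := by
                gcongr; exact hvn.le.trans (by gcongr)
            _ = _ := by ring
        have h2 := dist_triangle y (x + s • (w-x)) x0
        have h3 := dist_triangle (x + s • (w-x)) x x0
        linarith
      · have : tirC1 n * (‖w - x‖ / (ρ/(4*M))) ≤ 4 * tirC1 n * tirk n * M := by
          have : ‖w - x‖ / (ρ/(4*M)) ≤ tirk n * ρ / (ρ/(4*M)) := by gcongr
          have e : tirk n * ρ / (ρ/(4*M)) = 4 * tirk n * M := by field_simp
          rw [e] at this
          nlinarith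
        gcongr)
  simp only [zero_smul, add_zero] at key
  refine key.trans (add_le_add ?_ ?_)
  · rw [← hM, ← Real.rpow_natCast]
    refine Real.rpow_le_rpow_of_exponent_le ?_ ?_
    · have : (1:ℝ) ≤ m := by exact_mod_cast hm
      linarith
    · have : 2*m - M = Bad.card := by omega
      rw [this]; push_cast; linarith
  · have h1 := tir_fac_bound (4 * tirC1 n * tirk n) (by positivity) M
    have e1 : 4 * tirC1 n * tirk n * exp 1 = exp (-1) := by
      unfold tirk
      have : 4 * tirC1 n * (exp (-2) / (4 * tirC1 n)) = exp (-2) := by field_simp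
      rw [this, ← exp_add]; norm_num
    rw [e1, ← exp_nat_mul] at h1
    calc (4 * tirC1 n * tirk n * M)^M * exp A / M.factorial = (4 * tirC1 n * tirk n * M)^M / M.factorial * exp A := by ring
      _ ≤ exp (M * (-1)) * exp A := by gcongr
      _ = exp (A - M) := by rw [← exp_add]; ring_nf
      _ ≤ 1 := by
        apply exp_le_one_iff.2
        have : (m:ℝ) ≤ M := by exact_mod_cast hMm
        linarith


lemma tir_per_near (x x0 : EuclideanSpace ℝ (Fin n)) : ∃ v : Fin n → ℤ,
    dist (show EuclideanSpace ℝ (Fin n) from WithLp.toLp 2 fun i => x i + (v i : ℝ)) x0 ≤ √n := by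
  refine ⟨fun i => -⌊x i - x0 i⌋, ?_⟩
  rw [EuclideanSpace.dist_eq]
  apply Real.sqrt_le_sqrt
  calc _ ≤ ∑ i : Fin n, (1:ℝ) := by
        refine Finset.sum_le_sum fun i _ => ?_
        have h1 := Int.floor_le (x i - x0 i)
        have h2 := Int.lt_floor_add_one (x i - x0 i)
        rw [Real.dist_eq, sq_abs]
        push_cast
        nlinarith
    _ = n := by simp

lemma tir_max (u : EuclideanSpace ℝ (Fin n) → ℝ) (hc : Continuous u) (hp : ZnPeriodic n u)
    (x0 : EuclideanSpace ℝ (Fin n)) : ∃ x1, dist x1 x0 ≤ √n ∧ ∀ y, |u y| ≤ |u x1| := by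
  obtain ⟨x1, h1, h2⟩ := (isCompact_closedBall x0 (√n)).exists_isMaxOn ⟨x0, mem_closedBall_self (by positivity)⟩ hc.abs.continuousOn
  refine ⟨x1, h1, fun y => ?_⟩
  obtain ⟨v, hv⟩ := tir_per_near y x0
  rw [← hp y v]
  exact h2 hv

lemma tir_global (lam : ℝ) (hlam : 0 < lam) (u : EuclideanSpace ℝ (Fin n) → ℝ) (hu : TirEig n lam u)
    (hper : ZnPeriodic n u) (x0 : EuclideanSpace ℝ (Fin n)) (h0 : u x0 = 1)
    (hmax : ∀ y ∈ connectedComponentIn {y | u y ≠ 0} x0, u y ≤ 1)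
    (ρ : ℝ) (hρ : 0 < ρ) (hρ1 : ρ ≤ 1) (hρl : (24 * 2^n) * (lam * (2*ρ)^2) * 2^n ≤ (1/2)^(n+1))
    (p m : ℕ) (hp : 1 ≤ p) (hpB : 12 * (tirC1 n * √lam * (√n + 1)) ≤ p) (hpm : 2*p ≤ m) (hpρ : p * √n ≤ m * ρ) :
    ∀ y, |u y| ≤ 2 * (2*m:ℝ)^(2*m+1) := by
  classical
  obtain ⟨x1, hx1, hM⟩ := tir_max u hu.1.continuous hper x0
  set Mx := |u x1| with hMx
  have hV := tirV_pos n
  have hmN : 1 ≤ m := by omega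
  have hmR : (0:ℝ) < m := by exact_mod_cast hmN
  have hC1 := tirC1_ge n
  set F := {y | 1 < |u y|} with hF
  have hFo : IsOpen F := isOpen_Ioi.preimage hu.1.continuous.abs
  set T := Finset.Icc ((m:ℤ) - p + 1) m with hT
  have hTc : T.card = p := by rw [hT, Int.card_Icc]; omega
  have hTh : ∀ j ∈ T, 1/2 ≤ (j:ℝ)/m ∧ (j:ℝ)/m ≤ 1 ∧ 1 - (j:ℝ)/m ≤ p / m := by
    intro j hj
    have h1 := Finset.mem_Icc.1 hj
    have h2 : (m:ℤ) ≤ 2*j := by omega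
    have h2' : (m:ℝ) ≤ 2*j := by exact_mod_cast h2
    have h3 : (j:ℝ) ≤ m := by exact_mod_cast h1.2
    have h4 : (m:ℤ) - p ≤ j := by omega
    have h4' : (m:ℝ) - p ≤ j := by exact_mod_cast h4
    refine ⟨?_, ?_, ?_⟩
    · rw [le_div_iff₀ hmR]; linarith
    · rw [div_le_iff₀ hmR]; linarith
    · rw [sub_le_iff_le_add, ← add_div, le_div_iff₀ hmR]; linarith
  obtain ⟨w, hw, Bad, hBT, hBc, hgood⟩ := tir_avg F hFo x1 x0 ρ hρ T (fun j => (j:ℝ)/m)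
    (fun j hj => by have := (hTh j hj).1; intro h; simp only [h] at this; norm_num at this)
    (fun _ => 1/2) (by
      intro j hj
      obtain ⟨t1, t2, t3⟩ := hTh j hj
      set t := (j:ℝ)/m
      simp only [abs_of_nonneg (by linarith : 0 ≤ t)]
      have h1 : volume.real (F ∩ ball (x1 + t • (x0 - x1)) (t * ρ)) ≤ volume.real (F ∩ ball x0 (2*ρ)) := by
        refine measureReal_mono ?_ ((measure_mono Set.inter_subset_right).trans_lt measure_ball_lt_top).ne
        refine Set.inter_subset_inter_right _ (ball_subset_ball' ?_)
        have e : x1 + t • (x0 - x1) - x0 = (1 - t) • (x1 - x0) := by module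
        rw [dist_eq_norm, e, norm_smul, Real.norm_of_nonneg (by linarith), ← dist_eq_norm]
        have h2 : (1 - t) * dist x1 x0 ≤ p / m * √n := by gcongr
        have h3 : (p:ℝ) / m * √n ≤ ρ := by
          rw [div_mul_eq_mul_div, div_le_iff₀ hmR]; linarith
        nlinarith
      have h2 := tir_volume lam hlam u hu x0 h0 hmax (2*ρ) (by positivity)
      refine (h1.trans h2).trans ?_
      have h3 : (1/2:ℝ)^n ≤ t^n := pow_le_pow_left₀ (by norm_num) t1 n
      calc (24 * 2^n) * (lam * (2*ρ)^2) * ((2*ρ)^n * tirV n) = ((24 * 2^n) * (lam * (2*ρ)^2) * 2^n) * (ρ^n * tirV n) := by rw [mul_pow 2 ρ n]; ring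
        _ ≤ (1/2)^(n+1) * (ρ^n * tirV n) := by gcongr
        _ = 1/2 * ((1/2)^n * (ρ^n * tirV n)) := by ring
        _ ≤ _ := by gcongr)
  simp only [Finset.sum_const, nsmul_eq_mul, hTc] at hBc
  set J := T \ Bad with hJ
  have hJT : J ⊆ (Finset.Icc (-(m:ℤ)) m).erase 0 := by
    intro j hj
    have h1 := Finset.mem_Icc.1 (Finset.mem_sdiff.1 hj).1
    rw [Finset.mem_erase, Finset.mem_Icc]; omega
  have hJc : J.card + Bad.card = p := by
    rw [hJ, Finset.card_sdiff_of_subset hBT, hTc]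
    have := Finset.card_le_card hBT
    omega
  set k := J.card with hk
  have hJc' : (k:ℝ) + Bad.card = p := by exact_mod_cast hJc
  set B := tirC1 n * √lam * (√n + 1) with hB
  have hBpos : 0 < B := by positivity
  have hk6 : 6 * B ≤ k := by linarith
  have hkpos : (0:ℝ) < k := by linarith
  have hk1 : 1 ≤ k := by exact_mod_cast hkpos
  have hsl : 0 < √lam := Real.sqrt_pos.2 hlam
  have hv : ‖w - x1‖ ≤ √n + 1 := by
    rw [← dist_eq_norm]
    have := dist_triangle w x0 x1
    rw [dist_comm x0 x1] at this
    rw [mem_ball] at hw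
    linarith
  have key := tir_interp m hmN J hJT (fun s => u (x1 + s • (w - x1))) (tir_line_smooth x1 (w-x1) u hu.1)
    (B^k * Mx)
    (by
      intro j hj
      obtain ⟨hj1, hj2⟩ := Finset.mem_sdiff.1 hj
      have := hgood j hj1 hj2
      simpa [hF] using this)
    (by
      intro s hs
      rw [← hk, tir_iterD x1 (w-x1) k u hu.1 s]
      refine (tir_L4 lam hlam.le (w-x1) (1/√lam) (by positivity) ?_ k u hu (x1 + s • (w-x1)) Mx (fun y _ => hM y)).trans ?_
      · rw [div_pow, Real.sq_sqrt hlam.le]; field_simp; exact le_refl _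
      · have : tirC1 n * (‖w - x1‖ / (1/√lam)) ≤ B := by
          rw [div_div_eq_mul_div, div_one, hB]
          calc tirC1 n * (‖w - x1‖ * √lam) ≤ tirC1 n * ((√n+1) * √lam) := by gcongr
            _ = _ := by ring
        gcongr)
  simp only [zero_smul, add_zero] at key
  have herr : B^k * Mx / k.factorial ≤ Mx / 2 := by
    have h1 := tir_fac_bound (B/k) (by positivity) k
    rw [div_mul_cancel₀ _ hkpos.ne'] at h1
    have h2 : B / k * exp 1 ≤ 1/2 := by
      have : B / k ≤ 1/6 := by rw [div_le_iff₀ hkpos]; linarith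
      have he := Real.exp_one_lt_d9
      calc B / k * exp 1 ≤ 1/6 * 3 := by gcongr; linarith
        _ = _ := by norm_num
    have h3 : (B / k * exp 1)^k ≤ 1/2 := by
      calc (B / k * exp 1)^k ≤ (1/2)^k := pow_le_pow_left₀ (by positivity) h2 k
        _ ≤ (1/2)^1 := pow_le_pow_of_le_one (by norm_num) (by norm_num) hk1
        _ = _ := by norm_num
    calc B^k * Mx / k.factorial = (B^k / k.factorial) * Mx := by ring
      _ ≤ 1/2 * Mx := mul_le_mul_of_nonneg_right (h1.trans h3) (abs_nonneg _)
      _ = _ := by ring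
  have hpw : (2*m:ℝ)^(2*m - k + 1) ≤ (2*m:ℝ)^(2*m+1) := by
    apply pow_le_pow_right₀
    · have : (1:ℝ) ≤ m := by exact_mod_cast hmN
      linarith
    · omega
  intro y
  have := hM y
  rw [← hk, ← hMx] at key
  linarith

lemma tir_global' (n : ℕ) : ∃ K : ℝ, 1 ≤ K ∧ ∀ (lam : ℝ), 1 ≤ lam → ∀ (u : EuclideanSpace ℝ (Fin n) → ℝ), TirEig n lam u →
    ZnPeriodic n u → ∀ x0 : EuclideanSpace ℝ (Fin n), u x0 = 1 →
    (∀ y ∈ connectedComponentIn {y | u y ≠ 0} x0, u y ≤ 1) → ∀ y, |u y| ≤ exp (K * lam^2) := by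
  have hC1 := tirC1_ge n
  set c0 : ℝ := (1/2)^(n+1) / ((24 * 2^n) * 4 * 2^n) with hc0
  have hc0p : 0 < c0 := by positivity
  have hc01 : c0 ≤ 1 := by
    rw [hc0, div_le_one (by positivity)]
    have h1 : (1/2:ℝ)^(n+1) ≤ 1 := pow_le_one₀ (by norm_num) (by norm_num)
    have h2 : (1:ℝ) ≤ 2^n := one_le_pow₀ (by norm_num)
    nlinarith
  set B0 := tirC1 n * (√n + 1) with hB0
  have hsn : 0 ≤ √(n:ℝ) := by positivity
  have hB01 : 1 ≤ B0 := by rw [hB0]; nlinarith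
  set K3 := 13 * B0 * (√n + 2) / √c0 + 1 with hK3
  have hK31 : 1 ≤ K3 := by
    have : 0 ≤ 13 * B0 * (√n + 2) / √c0 := by positivity
    linarith
  refine ⟨7 * K3^2, by nlinarith, ?_⟩
  intro lam hlam u hu hper x0 h0 hmax y
  have hlp : 0 < lam := by linarith
  have hsl : 1 ≤ √lam := Real.one_le_sqrt.2 hlam
  have hsc : 0 < √c0 := Real.sqrt_pos.2 hc0p
  set ρ := √c0 / √lam with hρ
  have hρp : 0 < ρ := by positivity
  have hρ1 : ρ ≤ 1 := by
    rw [hρ, div_le_one (by positivity)]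
    exact Real.sqrt_le_sqrt (hc01.trans hlam)
  have hρ2 : lam * ρ^2 = c0 := by
    rw [hρ, div_pow, Real.sq_sqrt hc0p.le, Real.sq_sqrt hlp.le]; field_simp
  set p := ⌈12 * (B0 * √lam)⌉₊ with hp
  have hBl : 1 ≤ B0 * √lam := by nlinarith
  have hp1 : 12 * (B0 * √lam) ≤ p := Nat.le_ceil _
  have hp2 : (p:ℝ) ≤ 13 * (B0 * √lam) := by
    have := Nat.ceil_lt_add_one (by positivity : 0 ≤ 12 * (B0 * √lam))
    linarith
  have hp3 : 1 ≤ p := by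
    have : (0:ℝ) < p := by linarith
    exact_mod_cast this
  set m := ⌈p * (√n + 2) / ρ⌉₊ with hm
  have hm1 : p * (√n + 2) / ρ ≤ m := Nat.le_ceil _
  have hm1' : p * (√n + 2) ≤ m * ρ := by rwa [div_le_iff₀ hρp] at hm1
  have hpR : (0:ℝ) ≤ p := by positivity
  have hmR : (0:ℝ) ≤ m := by positivity
  have hm2 : 2 * p ≤ m := by
    have : (2:ℝ) * p ≤ m := by nlinarith
    exact_mod_cast this
  have hm3 : (m:ℝ) ≤ K3 * lam := by
    have h1 := Nat.ceil_lt_add_one (by positivity : 0 ≤ p * (√n + 2) / ρ)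
    have h2 : p * (√n + 2) / ρ ≤ 13 * (B0 * √lam) * (√n + 2) / ρ := by gcongr
    have h3 : 13 * (B0 * √lam) * (√n + 2) / ρ = (13 * B0 * (√n + 2) / √c0) * lam := by
      rw [hρ]
      conv_rhs => rw [← Real.mul_self_sqrt hlp.le]
      field_simp
    rw [hK3, add_mul, one_mul]
    linarith
  have main := tir_global lam hlp u hu hper x0 h0 hmax ρ hρp hρ1
    (by
      have : (24 * 2^n) * (lam * (2*ρ)^2) * 2^n = ((24 * 2^n) * 4 * 2^n) * (lam * ρ^2) := by ring
      rw [this, hρ2, hc0, mul_div_cancel₀ _ (by positivity)]) p m hp3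
    (by rw [hB0] at hp1; linarith) hm2 (by nlinarith) y
  refine main.trans ?_
  have hm1R : (1:ℝ) ≤ m := by exact_mod_cast (by omega : 1 ≤ m)
  have e1 : (2*m:ℝ) ≤ exp (2*m) := by linarith [Real.add_one_le_exp (2*m:ℝ)]
  have e2 : (2*m:ℝ)^(2*m+1) ≤ exp ((2*m+1:ℕ) * (2*m)) := by
    rw [exp_nat_mul]; exact pow_le_pow_left₀ (by positivity) e1 _
  have e3 : (2:ℝ) ≤ exp 1 := by linarith [Real.add_one_le_exp (1:ℝ)]
  calc 2 * (2*m:ℝ)^(2*m+1) ≤ exp 1 * exp ((2*m+1:ℕ) * (2*m)) := by gcongr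
    _ = exp (1 + (2*m+1:ℕ) * (2*m)) := by rw [exp_add]
    _ ≤ _ := by
      apply exp_le_exp.2
      push_cast
      have : (m:ℝ)^2 ≤ (K3*lam)^2 := pow_le_pow_left₀ hmR hm3 2
      nlinarith


lemma tir_it1 (lam : ℝ) (hlam : 0 ≤ lam) (u : EuclideanSpace ℝ (Fin n) → ℝ) (hu : TirEig n lam u)
    (x0 : EuclideanSpace ℝ (Fin n)) (ρ L B : ℝ) (hρ : 0 < ρ) (hlR : lam * ρ^2 ≤ 1) (hL : 1 ≤ L) (hB : 1 ≤ B)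
    (hA : ∀ y ∈ ball x0 ρ, |u y| ≤ exp B)
    (hvol : volume.real ({y | 1 < |u y|} ∩ ball x0 ρ) ≤ (tirk n)^n * (1/(8*L^2))^(n+1) * (ρ^n * tirV n)) :
    ∀ x ∈ ball x0 (ρ/2), |u x| ≤ 2 * (4*B)^(B/L^2+1) := by
  intro x hx
  have hL2 : 1 ≤ L^2 := one_le_pow₀ hL
  have hm1 : 1 ≤ ⌈B⌉₊ := Nat.one_le_iff_ne_zero.2 (by
    have := Nat.le_ceil B
    intro h; rw [h] at this; norm_num at this; linarith)
  have hm2 : (⌈B⌉₊:ℝ) ≤ 2*B := by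
    have := Nat.ceil_lt_add_one (by linarith : 0 ≤ B)
    linarith
  have hm3 : (1:ℝ) ≤ ⌈B⌉₊ := by exact_mod_cast hm1
  have hth : 1/(8*L^2) ≤ 1/4 := by
    apply one_div_le_one_div_of_le <;> linarith
  have h := tir_step lam hlam u hu x0 ρ (1/(8*L^2)) B hρ hlR (by positivity) hth hA ⌈B⌉₊ hm1 (Nat.le_ceil B) hvol x hx
  have he : 4 * (1/(8*L^2)) * (⌈B⌉₊:ℝ) + 1 ≤ B/L^2+1 := by
    have : 4 * (1/(8*L^2)) * (⌈B⌉₊:ℝ) ≤ 4 * (1/(8*L^2)) * (2*B) := by gcongr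
    have h2 : 4 * (1/(8*L^2)) * (2*B) = B/L^2 := by field_simp; norm_num
    linarith
  have h1 : (2*(⌈B⌉₊:ℝ))^(4 * (1/(8*L^2)) * (⌈B⌉₊:ℝ) + 1) ≤ (4*B)^(B/L^2+1) := by
    calc (2*(⌈B⌉₊:ℝ))^(4 * (1/(8*L^2)) * (⌈B⌉₊:ℝ) + 1) ≤ (4*B)^(4 * (1/(8*L^2)) * (⌈B⌉₊:ℝ) + 1) := by
          apply rpow_le_rpow (by positivity) (by linarith) (by positivity)
      _ ≤ _ := rpow_le_rpow_of_exponent_le (by linarith) he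
  have h2 : 1 ≤ (4*B)^(B/L^2+1) := one_le_rpow (by linarith) (by positivity)
  linarith

lemma tir_it2 (L B : ℝ) (hL : 1 ≤ L) (hB : L^2 ≤ B) (hlog : 1 + 2 * log (4*B) ≤ L) :
    2 * (4*B)^(B/L^2+1) ≤ exp (B/L) := by
  have hL2 : 1 ≤ L^2 := one_le_pow₀ hL
  have hB0 : 0 < 4*B := by linarith
  have hq : 1 ≤ B/L^2 := by rw [le_div_iff₀ (by positivity)]; linarith
  have hl0 : 0 ≤ log (4*B) := log_nonneg (by linarith)
  rw [rpow_def_of_pos hB0]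
  have h2 : (2:ℝ) ≤ exp 1 := by have := Real.exp_one_gt_d9; linarith
  calc 2 * exp (log (4*B) * (B/L^2+1)) ≤ exp 1 * exp (log (4*B) * (B/L^2+1)) := by gcongr
    _ = exp (1 + log (4*B) * (B/L^2+1)) := by rw [exp_add]
    _ ≤ exp (B/L) := by
      apply exp_le_exp.2
      have h3 : B/L = B/L^2 * L := by field_simp
      rw [h3]
      nlinarith [mul_le_mul_of_nonneg_left hlog (by linarith : 0 ≤ B/L^2)]

lemma tir_it3 (lam : ℝ) (hlam : 0 < lam) (u : EuclideanSpace ℝ (Fin n) → ℝ) (hu : TirEig n lam u)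
    (x0 : EuclideanSpace ℝ (Fin n)) (h0 : u x0 = 1)
    (hmax : ∀ y ∈ connectedComponentIn {y | u y ≠ 0} x0, u y ≤ 1)
    (L R0 : ℝ) (I : ℕ) (hI : 1 ≤ I) (hL : 1 ≤ L) (hR0 : 0 < R0)
    (hvR : 24*2^n*(lam*R0^2) ≤ (tirk n)^n * (1/(8*L^2))^(n+1))
    (hglob : ∀ y, |u y| ≤ exp (L^I)) (hlog : 1 + 2 * log (4*L^I) ≤ L) :
    ∀ x ∈ ball x0 (R0/2^I), |u x| ≤ 32*L^2 := by
  have hkp := tirk_pos n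
  have hk := tirk_le n
  have hVp := tirV_pos n
  have hL2 : 1 ≤ L^2 := one_le_pow₀ hL
  have hlR : lam * R0^2 ≤ 1 := by
    have h1 : (tirk n)^n ≤ 1 := pow_le_one₀ hkp.le (by linarith)
    have h2 : (1/(8*L^2))^(n+1) ≤ 1 := pow_le_one₀ (by positivity) (by rw [div_le_one (by positivity)]; linarith)
    have h3 : (tirk n)^n * (1/(8*L^2))^(n+1) ≤ 1 := mul_le_one₀ h1 (by positivity) h2
    have h4 : (1:ℝ) ≤ 2^n := one_le_pow₀ (by norm_num)
    have h5 : 0 ≤ lam*R0^2 := by positivity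
    nlinarith
  have hsmall : ∀ ρ, 0 < ρ → ρ ≤ R0 → lam*ρ^2 ≤ 1 ∧
      volume.real ({y | 1 < |u y|} ∩ ball x0 ρ) ≤ (tirk n)^n * (1/(8*L^2))^(n+1) * (ρ^n * tirV n) := by
    intro ρ hρ hle
    have h1 : lam*ρ^2 ≤ lam*R0^2 := by gcongr
    refine ⟨h1.trans hlR, (tir_volume lam hlam u hu x0 h0 hmax ρ hρ).trans ?_⟩
    apply mul_le_mul_of_nonneg_right _ (by positivity)
    refine le_trans ?_ hvR
    gcongr
  have hind : ∀ j : ℕ, j + 1 ≤ I → ∀ x ∈ ball x0 (R0/2^j), |u x| ≤ exp (L^(I-j)) := by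
    intro j
    induction j with
    | zero => intro _ x _; exact hglob x
    | succ j ih =>
      intro hj x hx
      have ih' := ih (by omega)
      have hR : R0/2^j ≤ R0 := div_le_self hR0.le (one_le_pow₀ (by norm_num))
      obtain ⟨h1, h2⟩ := hsmall (R0/2^j) (by positivity) hR
      have h3 := tir_it1 lam hlam.le u hu x0 (R0/2^j) L (L^(I-j)) (by positivity) h1 hL (one_le_pow₀ hL) ih' h2 x
        (by convert hx using 1; rw [pow_succ]; field_simp)
      refine h3.trans ((tir_it2 L (L^(I-j)) hL (pow_le_pow_right₀ hL (by omega)) ?_).trans ?_)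
      · have : log (4*L^(I-j)) ≤ log (4*L^I) := by
          apply log_le_log (by positivity)
          gcongr
          omega
        linarith
      · apply exp_le_exp.2
        have : I - j = (I-(j+1))+1 := by omega
        rw [this, pow_succ, mul_div_assoc, div_self (by positivity), mul_one]
  obtain ⟨J, rfl⟩ : ∃ J, I = J+1 := ⟨I-1, by omega⟩
  have hlast := hind J le_rfl
  rw [Nat.add_sub_cancel_left, pow_one] at hlast
  intro x hx
  have hR : R0/2^J ≤ R0 := div_le_self hR0.le (one_le_pow₀ (by norm_num))
  obtain ⟨h1, h2⟩ := hsmall (R0/2^J) (by positivity) hR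
  have h3 := tir_it1 lam hlam.le u hu x0 (R0/2^J) L L (by positivity) h1 hL hL hlast h2 x
        (by convert hx using 1; rw [pow_succ]; field_simp)
  refine h3.trans ?_
  have h4 : (4*L)^(L/L^2+1) ≤ (4*L)^(2:ℝ) := by
    apply rpow_le_rpow_of_exponent_le (by linarith)
    have : L/L^2 ≤ 1 := by rw [div_le_one (by positivity)]; nlinarith
    linarith
  rw [rpow_two] at h4
  nlinarith

lemma tir_it4 (lam : ℝ) (hlam : 0 < lam) (u : EuclideanSpace ℝ (Fin n) → ℝ) (hu : TirEig n lam u)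
    (x0 : EuclideanSpace ℝ (Fin n)) (h0 : u x0 = 1) (L R : ℝ) (hL : 1 ≤ L) (hR : 0 < R) (hlR : lam*R^2 ≤ 1)
    (hb : ∀ x ∈ ball x0 R, |u x| ≤ 32*L^2) :
    ∀ y ∈ ball x0 (R/(128*tirC1 n*L^2)), 0 < u y := by
  have hC1 := tirC1_ge n
  have hL2 : 1 ≤ L^2 := one_le_pow₀ hL
  have hCL : 1 ≤ tirC1 n * L^2 := by nlinarith
  set C := 128*tirC1 n*L^2/R with hC
  have hCp : 0 < C := by positivity
  have hgrad : ∀ z ∈ ball x0 (R/2), ‖fderiv ℝ u z‖ ≤ C := by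
    intro z hz
    apply ContinuousLinearMap.opNorm_le_bound _ hCp.le
    intro v
    have h := tir_L3 lam hlam.le u hu z v (R/4) (32*L^2) (by positivity)
      (by have : 0 ≤ lam*R^2 := by positivity
          nlinarith) (by
        intro y hy
        apply hb
        rw [mem_ball] at hz ⊢
        rw [mem_closedBall] at hy
        have := dist_triangle y z x0
        linarith)
    rw [Real.norm_eq_abs]
    refine h.trans (le_of_eq ?_)
    rw [hC]; field_simp; ring
  intro y hy
  have hr : R/(128*tirC1 n*L^2) = 1/C := by rw [hC]; field_simp
  have hr2 : R/(128*tirC1 n*L^2) ≤ R/2 := by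
    apply div_le_div_of_nonneg_left hR.le (by norm_num); nlinarith
  have hy2 : y ∈ ball x0 (R/2) := ball_subset_ball hr2 hy
  have hd : ∀ z ∈ ball x0 (R/2), DifferentiableAt ℝ u z := fun z _ =>
    (hu.1.differentiable (by simp)).differentiableAt
  have hmv := (convex_ball x0 (R/2)).norm_image_sub_le_of_norm_fderiv_le hd hgrad
    (mem_ball_self (by positivity)) hy2
  rw [hr, mem_ball, dist_eq_norm, lt_div_iff₀ hCp] at hy
  rw [h0, Real.norm_eq_abs] at hmv
  have h2 := (abs_le.1 hmv).1
  nlinarith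

lemma tir_core (n : ℕ) (δ : ℝ) (hδ : 0 < δ) : ∃ a : ℝ, 0 < a ∧ ∃ Λ : ℝ, 1 ≤ Λ ∧ ∀ lam, Λ ≤ lam →
    ∀ (u : EuclideanSpace ℝ (Fin n) → ℝ), TirEig n lam u →
    ZnPeriodic n u → ∀ x0 : EuclideanSpace ℝ (Fin n), u x0 = 1 →
    (∀ y ∈ connectedComponentIn {y | u y ≠ 0} x0, u y ≤ 1) →
    ∀ y ∈ ball x0 (a * lam^(-(1:ℝ)/2 - δ*(n+3))), 0 < u y := by
  obtain ⟨K, hK1, hK⟩ := tir_global' n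
  obtain ⟨I, hI⟩ := exists_nat_ge (3/δ)
  rw [div_le_iff₀ hδ] at hI
  have hI1 : 1 ≤ I := by
    rcases Nat.eq_zero_or_pos I with h | h
    · rw [h] at hI; norm_num at hI
    · exact h
  have hC1 := tirC1_ge n
  have hkp := tirk_pos n
  have hk := tirk_le n
  set c0 : ℝ := (tirk n)^n * (1/8)^(n+1) / (24*2^n) with hc0
  have hc0p : 0 < c0 := by positivity
  have hc01 : c0 ≤ 1 := by
    rw [hc0, div_le_one (by positivity)]
    have h1 : (tirk n)^n ≤ 1 := pow_le_one₀ hkp.le (by linarith)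
    have h2 : ((1:ℝ)/8)^(n+1) ≤ 1 := pow_le_one₀ (by positivity) (by norm_num)
    have h3 : (tirk n)^n * (1/8)^(n+1) ≤ 1 := mul_le_one₀ h1 (by positivity) h2
    have h4 : (1:ℝ) ≤ 2^n := one_le_pow₀ (by norm_num)
    linarith
  have hev : ∀ᶠ lam : ℝ in atTop, 1 + 2 * (log 4 + δ * I * log lam) ≤ lam^δ := by
    have h1 := (isLittleO_log_rpow_atTop hδ).bound (show 0 < 1/(4*(δ*I)) by positivity)
    have h2 := (tendsto_rpow_atTop hδ).eventually_ge_atTop (2*(1+2*log 4))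
    filter_upwards [h1, h2, eventually_ge_atTop 1] with x h1 h2 h3
    rw [Real.norm_eq_abs, Real.norm_eq_abs, abs_of_nonneg (log_nonneg h3), abs_of_nonneg (by positivity)] at h1
    have h4 : 4*(δ*I)*log x ≤ x^δ := by
      rw [one_div, inv_mul_eq_div, le_div_iff₀ (by positivity)] at h1
      linarith
    linarith
  obtain ⟨Λ1, hΛ1⟩ := eventually_atTop.1 hev
  refine ⟨c0/2^I/(128*tirC1 n), by positivity, max Λ1 (max K 1), le_max_of_le_right (le_max_right _ _), ?_⟩
  intro lam hl u hu hp x0 h0 hmax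
  have hl1 : 1 ≤ lam := (le_max_of_le_right (le_max_right _ _)).trans hl
  have hlK : K ≤ lam := (le_max_of_le_right (le_max_left _ _)).trans hl
  have hlog := hΛ1 lam ((le_max_left _ _).trans hl)
  have hl0 : 0 < lam := by linarith
  set L := lam^δ with hLdef
  have hL1 : 1 ≤ L := one_le_rpow hl1 hδ.le
  have hLI : L^I = lam^(δ*I) := by rw [hLdef, rpow_mul hl0.le, rpow_natCast]
  have hglob : ∀ y, |u y| ≤ exp (L^I) := by
    intro y
    refine (hK lam hl1 u hu hp x0 h0 hmax y).trans (exp_le_exp.2 ?_)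
    calc K*lam^2 ≤ lam*lam^2 := by gcongr
      _ = lam^(3:ℝ) := by norm_cast; ring
      _ ≤ lam^(δ*I) := rpow_le_rpow_of_exponent_le hl1 (by linarith)
      _ = _ := hLI.symm
  have hlog2 : 1 + 2*log (4*L^I) ≤ L := by
    rw [hLI, log_mul (by norm_num) (by positivity), log_rpow hl0]
    exact hlog
  set R0 := c0 / L^(n+1) * lam^(-(1:ℝ)/2) with hR0
  have hR0p : 0 < R0 := by positivity
  have hsq : lam * R0^2 = c0^2/(L^(n+1))^2 := by
    have : lam * (lam^(-(1:ℝ)/2))^2 = 1 := by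
      rw [← rpow_natCast (lam^(-(1:ℝ)/2)), ← rpow_mul hl0.le]
      norm_num
      rw [rpow_neg_one, mul_inv_cancel₀ hl0.ne']
    rw [hR0, mul_pow, div_pow]
    linear_combination (c0^2/(L^(n+1))^2) * this
  have hc02 : c0^2 ≤ c0 := by nlinarith
  have hvR : 24*2^n*(lam*R0^2) ≤ (tirk n)^n * (1/(8*L^2))^(n+1) := by
    rw [hsq]
    calc 24*2^n*(c0^2/(L^(n+1))^2) ≤ 24*2^n*(c0/(L^(n+1))^2) := by gcongr
      _ = (24*2^n*c0)/(L^(n+1))^2 := by ring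
      _ = ((tirk n)^n * (1/8)^(n+1))/(L^(n+1))^2 := by rw [hc0]; field_simp
      _ = _ := by
        rw [one_div, one_div, mul_inv, mul_pow, inv_pow (L^2), ← pow_mul, ← pow_mul, mul_comm 2 (n+1)]; ring
  have hb := tir_it3 lam hl0 u hu x0 h0 hmax L R0 I hI1 hL1 hR0p hvR hglob hlog2
  have hR1 : lam * (R0/2^I)^2 ≤ 1 := by
    have h1 : R0/2^I ≤ R0 := div_le_self hR0p.le (one_le_pow₀ (by norm_num))
    calc lam * (R0/2^I)^2 ≤ lam*R0^2 := by gcongr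
      _ = c0^2/(L^(n+1))^2 := hsq
      _ ≤ 1 := by
        rw [div_le_one (by positivity)]
        have : 1 ≤ (L^(n+1))^2 := one_le_pow₀ (one_le_pow₀ hL1)
        linarith
  have hfin := tir_it4 lam hl0 u hu x0 h0 L (R0/2^I) hL1 (by positivity) hR1 hb
  convert hfin using 4
  have hLn : lam^(δ*((n:ℝ)+3)) = L^(n+3) := by
    rw [hLdef, rpow_mul hl0.le, ← rpow_natCast]; norm_num
  rw [rpow_sub hl0, hLn, hR0]
  field_simp
  ring


lemma tir_lap_aff (a c : ℝ) (u : EuclideanSpace ℝ (Fin n) → ℝ) (hu : ContDiff ℝ (⊤:ℕ∞) u) (x : EuclideanSpace ℝ (Fin n)) :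
    lap n (fun y => a + c * u y) x = c * lap n u x := by
  unfold lap
  rw [Finset.mul_sum]
  apply Finset.sum_congr rfl
  intro i _
  have h1 : (fun y => fderiv ℝ (fun y => a + c * u y) y (EuclideanSpace.single i (1:ℝ))) =
      fun y => c * tirD (EuclideanSpace.single i (1:ℝ)) u y := by
    funext y
    rw [fderiv_const_add, fderiv_const_mul (hu.differentiable (by simp)).differentiableAt]
    rfl
  rw [h1, fderiv_const_mul ((tirD_smooth _ u hu).differentiable (by simp)).differentiableAt]
  rfl

lemma tir_eig_mul (lam c : ℝ) (u : EuclideanSpace ℝ (Fin n) → ℝ) (hu : TirEig n lam u) :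
    TirEig n lam (fun y => c * u y) := by
  refine ⟨contDiff_const.mul hu.1, fun x => ?_⟩
  have := tir_lap_aff 0 c u hu.1 x
  simp only [zero_add] at this
  rw [this, hu.2]; ring

lemma tir_per_add (u : EuclideanSpace ℝ (Fin n) → ℝ) (hp : ZnPeriodic n u) (v : Fin n → ℤ) (x : EuclideanSpace ℝ (Fin n)) :
    u (x + WithLp.toLp 2 fun i => (v i : ℝ)) = u x := hp x v

lemma tir_sup_att (u : EuclideanSpace ℝ (Fin n) → ℝ) (hc : Continuous u) (hp : ZnPeriodic n u)
    (x : EuclideanSpace ℝ (Fin n)) (hx : u x ≠ 0) :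
    ∃ x0 ∈ connectedComponentIn {y | u y ≠ 0} x, ∀ y ∈ connectedComponentIn {y | u y ≠ 0} x, |u y| ≤ |u x0| := by
  set Ω := connectedComponentIn {y | u y ≠ 0} x with hΩ
  have hxΩ : x ∈ Ω := mem_connectedComponentIn hx
  have hop : IsOpen {y | u y ≠ 0} := isOpen_ne_fun hc continuous_const
  let W : (Fin n → ℤ) → EuclideanSpace ℝ (Fin n) := fun v => WithLp.toLp 2 fun i => (v i : ℝ)
  have hW : ∀ v y, u (y + W v) = u y := fun v y => tir_per_add u hp v y
  have hWn : ∀ v, W (-v) = - W v := by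
    intro v; ext i; simp [W]
  let T : Set (EuclideanSpace ℝ (Fin n)) := {z | z ∈ closedBall 0 √n ∧ ∃ v, z + W v ∈ Ω}
  have hT : ∀ y ∈ Ω, ∃ z ∈ T, u z = u y := by
    intro y hy
    obtain ⟨v, hv⟩ := tir_per_near y 0
    refine ⟨y + W v, ⟨hv, -v, ?_⟩, hW v y⟩
    rw [hWn, add_neg_cancel_right]; exact hy
  have hcl : IsCompact (closure T) :=
    (isCompact_closedBall (0 : EuclideanSpace ℝ (Fin n)) √n).of_isClosed_subset isClosed_closure
      (closure_minimal (fun z hz => hz.1) isClosed_closedBall)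
  obtain ⟨z0, hz0, hz0u⟩ := hT x hxΩ
  obtain ⟨ys, hys, hmax⟩ := hcl.exists_isMaxOn ⟨z0, subset_closure hz0⟩ hc.abs.continuousOn
  have hmax' : ∀ y ∈ Ω, |u y| ≤ |u ys| := by
    intro y hy
    obtain ⟨z, hz, hzu⟩ := hT y hy
    rw [← hzu]; exact hmax (subset_closure hz)
  have hys0 : u ys ≠ 0 := by
    have h1 := hmax' x hxΩ
    have h2 : 0 < |u x| := abs_pos.2 hx
    exact abs_pos.1 (h2.trans_le h1)
  obtain ⟨r, hr, hball⟩ := Metric.isOpen_iff.1 hop ys hys0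
  obtain ⟨z, hzT, hzd⟩ := Metric.mem_closure_iff.1 hys r hr
  obtain ⟨hz1, v, hzv⟩ := hzT
  have hpre : IsPreconnected (ball (ys + W v) r) := (convex_ball _ _).isPreconnected
  have hsub : ball (ys + W v) r ⊆ {y | u y ≠ 0} := by
    intro y hy
    have h1 : y - W v ∈ ball ys r := by
      rw [mem_ball, dist_eq_norm] at hy ⊢
      convert hy using 2; abel
    have h2 := hball h1
    have h3 := hW v (y - W v)
    rw [sub_add_cancel] at h3
    show u y ≠ 0
    rw [h3]; exact h2
  have hzb : z + W v ∈ ball (ys + W v) r := by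
    rw [mem_ball, dist_add_right, dist_comm]; exact hzd
  have h4 := hpre.subset_connectedComponentIn hzb hsub
  rw [← connectedComponentIn_eq hzv] at h4
  refine ⟨ys + W v, h4 (mem_ball_self hr), fun y hy => ?_⟩
  rw [hW]; exact hmax' y hy

lemma tir_has_zero (lam : ℝ) (hlam : 0 < lam) (u : EuclideanSpace ℝ (Fin n) → ℝ) (hu : TirEig n lam u)
    (hp : ZnPeriodic n u) : ∃ y, u y = 0 := by
  by_contra! hne
  have hc := hu.1.continuous
  obtain ⟨x1, -, h1⟩ := tir_max (fun y => (u y)⁻¹) (hc.inv₀ hne)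
    (fun x v => by show (u _)⁻¹ = _; rw [hp x v]) 0
  have hx1 : 0 < |u x1| := abs_pos.2 (hne x1)
  set w : EuclideanSpace ℝ (Fin n) → ℝ := fun y => (u x1)⁻¹ * u y with hw
  have hwc : Continuous w := continuous_const.mul hc
  have hw1 : w x1 = 1 := inv_mul_cancel₀ (hne x1)
  have hwabs : ∀ y, 1 ≤ |w y| := by
    intro y
    have h2 := h1 y
    rw [abs_inv, abs_inv, inv_le_inv₀ (abs_pos.2 (hne y)) hx1] at h2
    rw [hw, abs_mul, abs_inv, inv_mul_eq_div, le_div_iff₀ hx1]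
    linarith
  have hwpos : ∀ y, 1 ≤ w y := by
    intro y
    by_contra hlt
    have hneg : w y ≤ 0 := by
      by_contra h
      push Not at h
      have := hwabs y
      rw [abs_of_pos h] at this
      exact hlt this
    obtain ⟨z, hz⟩ := mem_range_of_exists_le_of_exists_ge hwc ⟨y, hneg⟩ ⟨x1, by rw [hw1]; norm_num⟩
    have := hwabs z
    rw [hz] at this; norm_num at this
  have hweig := tir_eig_mul lam (u x1)⁻¹ u hu
  have hsm : ContDiff ℝ (⊤:ℕ∞) (fun y => 1 + (-1) * w y) := contDiff_const.add (contDiff_const.mul hweig.1)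
  obtain ⟨s, hs0, hs1, h⟩ := tir_L2 (fun y => 1 + (-1) * w y) (hsm.of_le tir_two_le) x1 1 (-lam) one_pos (by
    intro y
    rw [tir_lap_aff 1 (-1) w hweig.1 y, hweig.2 y]
    have := hwpos y
    have h3 : lam * 1 ≤ lam * w y := by gcongr
    show - -lam ≤ -1 * (-lam * w y)
    linarith)
  have hle : ∫ z, (fun y => 1 + (-1) * w y) (x1 + (1:ℝ) • z) * (8 * tirq 3 z) ≤ 0 := by
    apply integral_nonpos
    intro z
    have h2 := tirq_nonneg 3 z
    have h3 := hwpos (x1 + (1:ℝ) • z)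
    show (1 + (-1) * w (x1 + (1:ℝ) • z)) * (8 * tirq 3 z) ≤ 0
    apply mul_nonpos_of_nonpos_of_nonneg <;> linarith
  have hP := tirP_pos n
  have h5 : 0 < lam * s * tirP n := by positivity
  simp only [hw1] at h
  simp only [] at hle
  linarith

lemma tir_inner_bdd (lam : ℝ) (hlam : 0 < lam) (u : EuclideanSpace ℝ (Fin n) → ℝ) (hu : TirEig n lam u)
    (hp : ZnPeriodic n u) (x : EuclideanSpace ℝ (Fin n)) :
    BddAbove {ρ : ℝ | 0 < ρ ∧ ∃ c, Metric.ball c ρ ⊆ connectedComponentIn {y | u y ≠ 0} x} := by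
  refine ⟨√n, ?_⟩
  rintro ρ ⟨hρ, c, hc⟩
  by_contra hlt
  push Not at hlt
  obtain ⟨y, hy⟩ := tir_has_zero lam hlam u hu hp
  obtain ⟨v, hv⟩ := tir_per_near y c
  have h1 := connectedComponentIn_subset _ _ (hc (mem_ball.2 (hv.trans_lt hlt)))
  apply h1
  rw [← hy]; exact hp y v

lemma tir_nodal (n : ℕ) (δ : ℝ) (hδ : 0 < δ) : ∃ a : ℝ, 0 < a ∧ ∃ Λ : ℝ, 1 ≤ Λ ∧ ∀ lam, Λ ≤ lam →
    ∀ (u : EuclideanSpace ℝ (Fin n) → ℝ), TirEig n lam u →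
    ZnPeriodic n u → ∀ Ω, IsNodalDomain u Ω → a * lam^(-(1:ℝ)/2 - δ*(n+3)) ≤ innerRadius Ω := by
  obtain ⟨a, ha, Λ, hΛ, h⟩ := tir_core n δ hδ
  refine ⟨a, ha, Λ, hΛ, ?_⟩
  rintro lam hl u hu hp Ω ⟨x, hx, rfl⟩
  have hl0 : 0 < lam := by linarith
  obtain ⟨x0, hx0, hmax⟩ := tir_sup_att u hu.1.continuous hp x hx
  have hux0 : u x0 ≠ 0 := connectedComponentIn_subset _ _ hx0
  have hset : {y | (u x0)⁻¹ * u y ≠ 0} = {y | u y ≠ 0} := by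
    ext y; simp [hux0]
  have hpos := h lam hl (fun y => (u x0)⁻¹ * u y) (tir_eig_mul lam _ u hu)
    (fun y v => by show _ * u _ = _; rw [hp y v]) x0 (inv_mul_cancel₀ hux0) (by
      rw [hset, ← connectedComponentIn_eq hx0]
      intro y hy
      have h1 := hmax y hy
      refine (le_abs_self _).trans ?_
      rw [abs_mul, abs_inv, inv_mul_eq_div]
      exact div_le_one_of_le₀ h1 (abs_nonneg _))
  have hr : 0 < a * lam^(-(1:ℝ)/2 - δ*(n+3)) := by positivity
  apply le_csSup (tir_inner_bdd lam hl0 u hu hp x)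
  refine ⟨hr, x0, ?_⟩
  rw [connectedComponentIn_eq hx0]
  apply (convex_ball _ _).isPreconnected.subset_connectedComponentIn (mem_ball_self hr)
  intro y hy h0
  have := hpos y hy
  simp [h0] at this

lemma tir_density (S : Set ℕ) (N0 : ℕ) (h : ∀ j, N0 ≤ j → j ∈ S) : FullDensity S := by
  unfold FullDensity
  have hfin : ∀ N, (S ∩ Set.Icc 1 N).Finite := fun N => (Set.finite_Icc 1 N).inter_of_right S
  have hlo : ∀ N : ℕ, (N:ℝ) - N0 ≤ Nat.card ↥(S ∩ Set.Icc 1 N) := by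
    intro N
    have h1 : Set.Ioc N0 N ⊆ S ∩ Set.Icc 1 N := by
      intro j hj
      exact ⟨h j hj.1.le, by have := hj.1; omega, hj.2⟩
    have h2 := Set.ncard_le_ncard h1 (hfin N)
    rw [← Finset.coe_Ioc, Set.ncard_coe_finset, Nat.card_Ioc] at h2
    rw [Nat.card_coe_set_eq]
    have h3 : N ≤ (S ∩ Set.Icc 1 N).ncard + N0 := by omega
    have h4 : (N:ℝ) ≤ (S ∩ Set.Icc 1 N).ncard + N0 := by exact_mod_cast h3
    linarith
  have hhi : ∀ N : ℕ, (Nat.card ↥(S ∩ Set.Icc 1 N) : ℝ) ≤ N := by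
    intro N
    have h2 := Set.ncard_le_ncard (Set.inter_subset_right : S ∩ Set.Icc 1 N ⊆ Set.Icc 1 N) (Set.finite_Icc 1 N)
    rw [← Finset.coe_Icc, Set.ncard_coe_finset (Finset.Icc 1 N), Nat.card_Icc] at h2
    rw [Nat.card_coe_set_eq, ← Finset.coe_Icc]
    exact_mod_cast h2
  have hl : Tendsto (fun N : ℕ => 1 - (N0:ℝ)/N) atTop (nhds 1) := by
    have := (tendsto_const_div_atTop_nhds_zero_nat (N0:ℝ)).const_sub 1
    simpa using this
  refine tendsto_of_tendsto_of_tendsto_of_le_of_le' hl tendsto_const_nhds ?_ ?_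
  · filter_upwards [eventually_ge_atTop 1] with N hN
    have hN' : (0:ℝ) < N := by exact_mod_cast hN
    rw [le_div_iff₀ hN', sub_mul, div_mul_cancel₀ _ hN'.ne', one_mul]
    exact hlo N
  · filter_upwards [eventually_ge_atTop 1] with N hN
    exact div_le_one_of_le₀ (hhi N) (by positivity)

end TirHelpers

theorem toral_inner_radius_full_density
    (n : ℕ) (hn : 3 ≤ n)
    (ψ : ℕ → EuclideanSpace ℝ (Fin n) → ℝ) (lam : ℕ → ℝ)
    (hsmooth : ∀ j, ContDiff ℝ (⊤ : ℕ∞) (ψ j)) (hper : ∀ j, ZnPeriodic n (ψ j))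
    (heig : ∀ j x, lap n (ψ j) x = -(lam j) * ψ j x)
    (hlam : Tendsto lam atTop atTop)
    (hON : ∀ i j, (∫ x in fundDom n, ψ i x * ψ j x) = if i = j then 1 else 0)
    (hcomplete : ∀ f : EuclideanSpace ℝ (Fin n) → ℝ,
      MemLp f 2 (volume.restrict (fundDom n)) →
      (∀ j, (∫ x in fundDom n, f x * ψ j x) = 0) →
      f =ᵐ[volume.restrict (fundDom n)] 0)
    (ε : ℝ) (hε : 0 < ε) :
    ∃ a₁ : ℝ, 0 < a₁ ∧ ∃ S : Set ℕ, FullDensity S ∧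
      ∀ j ∈ S, ∀ Ω, IsNodalDomain (ψ j) Ω →
        a₁ * lam j ^ (-(1:ℝ)/2 - ((n:ℝ)-2)^2/(4*(n:ℝ)) - ε) ≤ innerRadius Ω := by
  obtain ⟨a, ha, Λ, hΛ, h⟩ := tir_nodal n (ε/((n:ℝ)+3)) (by positivity)
  obtain ⟨N0, hN0⟩ := eventually_atTop.1 (hlam.eventually_ge_atTop Λ)
  refine ⟨a, ha, {j | Λ ≤ lam j}, tir_density _ N0 hN0, ?_⟩
  intro j hj Ω hΩ
  refine le_trans ?_ (h (lam j) hj (ψ j) ⟨hsmooth j, heig j⟩ (hper j) Ω hΩ)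
  apply mul_le_mul_of_nonneg_left _ ha.le
  apply rpow_le_rpow_of_exponent_le (hΛ.trans hj)
  have h1 : ε/((n:ℝ)+3) * ((n:ℝ)+3) = ε := by field_simp
  rw [h1]
  have h2 : 0 ≤ ((n:ℝ)-2)^2/(4*(n:ℝ)) := by positivity
  linarith
end
end

section
/- Let n ≥ 1 and let (ψ_j)_{j∈S} be a sequence of smooth ℤⁿ-periodic real-valued functions on ℝⁿ with ∫_{[0,1)ⁿ} ψ_j² dx = 1, indexed by λ_j → ∞, such that for some R₀ > 0, for every r ∈ (0, R₀) and every x ∈ ℝⁿ, ∫_{B_r(x)} ψ_j² dx → Vol(B_r(x)) as j → ∞ (pointwise in x and r). Then there exist K₁, K₂ > 0 and r₀ > 0, with K₁, K₂ independent of r, j and x, such that for each r ∈ (0, r₀) there exists Λ_r with: for all j with λ_j ≥ Λ_r and all x ∈ ℝⁿ, K₁ rⁿ ≤ ∫_{B_r(x)} ψ_j² dx ≤ K₂ rⁿ. -/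
open MeasureTheory Metric Filter Real

noncomputable section

theorem aux_translate {n : ℕ} (f : EuclideanSpace ℝ (Fin n) → ℝ) (hf : ZnPeriodic n f)
    (x : EuclideanSpace ℝ (Fin n)) (v : Fin n → ℤ) (r : ℝ) :
    (∫ y in Metric.ball (x + WithLp.toLp 2 fun i => (v i : ℝ)) r, (f y)^2) =
      ∫ y in Metric.ball x r, (f y)^2 := by
  set w : EuclideanSpace ℝ (Fin n) := WithLp.toLp 2 fun i => (v i : ℝ) with hw
  have h := (measurePreserving_add_right (volume : Measure (EuclideanSpace ℝ (Fin n)))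
    w).setIntegral_preimage_emb (MeasurableEquiv.addRight w).measurableEmbedding
    (fun y => (f y)^2) (Metric.ball (x + w) r)
  rw [← h]
  have hp : (fun y => y + w) ⁻¹' Metric.ball (x + w) r = Metric.ball x r := by
    ext y; simp [Metric.mem_ball]
  rw [hp]
  congr 1
  ext y
  have : f (y + w) = f y := by
    rw [← hf y v]; congr 1
  rw [this]

theorem aux_cover (n : ℕ) (s : ℝ) (hs : 0 < s) :
    ∃ t : Finset (EuclideanSpace ℝ (Fin n)), ∀ x : EuclideanSpace ℝ (Fin n),
      (∀ i, x i ∈ Set.Icc (0:ℝ) 1) → ∃ c ∈ t, dist x c < s := by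
  have hc : IsCompact ((fun u : Fin n → ℝ => (WithLp.toLp 2 u : EuclideanSpace ℝ (Fin n))) ''
      Set.Icc 0 1) := isCompact_Icc.image (PiLp.continuous_toLp 2 _)
  obtain ⟨t, -, htf, ht⟩ := hc.finite_cover_balls hs
  refine ⟨htf.toFinset, fun x hx => ?_⟩
  have hx' : x ∈ (fun u : Fin n → ℝ => (WithLp.toLp 2 u : EuclideanSpace ℝ (Fin n))) ''
      Set.Icc 0 1 := ⟨x.ofLp, ⟨fun i => (hx i).1, fun i => (hx i).2⟩, rfl⟩
  have := ht hx'
  simp only [Set.mem_iUnion, Metric.mem_ball] at this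
  obtain ⟨c, hc, hd⟩ := this
  exact ⟨c, by simpa using hc, hd⟩

theorem equidistribution_gives_uniform_mass_bounds
    (n : ℕ) (hn : 1 ≤ n)
    (ψ : ℕ → EuclideanSpace ℝ (Fin n) → ℝ) (lam : ℕ → ℝ)
    (hsmooth : ∀ j, ContDiff ℝ (⊤ : ℕ∞) (ψ j)) (hper : ∀ j, ZnPeriodic n (ψ j))
    (hnorm : ∀ j, (∫ x in fundDom n, (ψ j x)^2) = 1)
    (hlam : Tendsto lam atTop atTop)
    (R₀ : ℝ) (hR₀ : 0 < R₀)
    (hequi : ∀ r : ℝ, 0 < r → r < R₀ → ∀ x : EuclideanSpace ℝ (Fin n),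
      Tendsto (fun j => ∫ y in Metric.ball x r, (ψ j y)^2) atTop
        (nhds (volume (Metric.ball x r)).toReal)) :
    ∃ K₁ K₂ r₀ : ℝ, 0 < K₁ ∧ 0 < K₂ ∧ 0 < r₀ ∧
      ∀ r : ℝ, 0 < r → r < r₀ → ∃ Λ : ℝ, ∀ j, Λ ≤ lam j →
        ∀ x : EuclideanSpace ℝ (Fin n),
          K₁ * r ^ n ≤ (∫ y in Metric.ball x r, (ψ j y)^2) ∧
          (∫ y in Metric.ball x r, (ψ j y)^2) ≤ K₂ * r ^ n := by
  set V : ℝ := (volume (Metric.ball (0 : EuclideanSpace ℝ (Fin n)) 1)).toReal with hV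
  have hVpos : 0 < V :=
    ENNReal.toReal_pos (Metric.measure_ball_pos _ _ one_pos).ne' measure_ball_lt_top.ne
  have hvol : ∀ (x : EuclideanSpace ℝ (Fin n)) (r : ℝ), 0 < r →
      (volume (Metric.ball x r)).toReal = r ^ n * V := by
    intro x r hr
    rw [Measure.addHaar_ball_of_pos _ _ hr, ENNReal.toReal_mul, ENNReal.toReal_ofReal (by positivity)]
    simp [hV]
  refine ⟨V / 2 / 2 ^ n, 2 * 2 ^ n * V, R₀ / 2, by positivity, by positivity, by positivity, ?_⟩
  intro r hr hr0
  obtain ⟨t, ht⟩ := aux_cover n (r / 2) (by positivity)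
  have hev : ∀ᶠ j in atTop, ∀ c ∈ t,
      (r / 2) ^ n * V / 2 < (∫ y in Metric.ball c (r / 2), (ψ j y)^2) ∧
      (∫ y in Metric.ball c (2 * r), (ψ j y)^2) < 2 * ((2 * r) ^ n * V) := by
    rw [Filter.eventually_all_finset]
    intro c _
    have h1 := hequi (r / 2) (by positivity) (by linarith) c
    have h2 := hequi (2 * r) (by positivity) (by linarith) c
    rw [hvol c _ (by positivity)] at h1 h2
    have p1 : 0 < (r / 2) ^ n * V := by positivity
    have p2 : 0 < (2 * r) ^ n * V := by positivity
    exact (h1.eventually (lt_mem_nhds (by linarith))).and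
      (h2.eventually (gt_mem_nhds (by linarith)))
  obtain ⟨N, hN⟩ := eventually_atTop.1 hev
  obtain ⟨M, hM⟩ := ((Finset.range N).image lam).bddAbove
  refine ⟨M + 1, fun j hj x => ?_⟩
  have hjN : N ≤ j := by
    by_contra! h
    have := hM (Finset.mem_coe.2 (Finset.mem_image_of_mem lam (Finset.mem_range.2 h)))
    linarith
  rw [← aux_translate (ψ j) (hper j) x (fun i => -⌊x i⌋) r]
  set x' : EuclideanSpace ℝ (Fin n) := x + WithLp.toLp 2 fun i => ((-⌊x i⌋ : ℤ) : ℝ) with hx'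
  obtain ⟨c, hc, hd⟩ := ht x' (fun i => by
    have h1 := Int.floor_le (x i)
    have h2 := Int.lt_floor_add_one (x i)
    simp only [hx', PiLp.add_apply, Int.cast_neg]
    constructor <;> linarith)
  obtain ⟨hlo, hhi⟩ := hN j hjN c hc
  have hint : ∀ (z : EuclideanSpace ℝ (Fin n)) (s : ℝ),
      IntegrableOn (fun y => (ψ j y)^2) (Metric.ball z s) := fun z s =>
    ((((hsmooth j).continuous.pow 2).continuousOn.integrableOn_compact
      (isCompact_closedBall z s)).mono_set Metric.ball_subset_closedBall)
  have s1 : Metric.ball c (r / 2) ⊆ Metric.ball x' r :=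
    Metric.ball_subset_ball' (by rw [dist_comm]; linarith)
  have s2 : Metric.ball x' r ⊆ Metric.ball c (2 * r) :=
    Metric.ball_subset_ball' (by linarith)
  have i1 := setIntegral_mono_set (hint x' r) (ae_of_all _ fun y => sq_nonneg (ψ j y))
    s1.eventuallyLE
  have i2 := setIntegral_mono_set (hint c (2 * r)) (ae_of_all _ fun y => sq_nonneg (ψ j y))
    s2.eventuallyLE
  constructor
  · refine le_trans (le_of_eq ?_) (hlo.le.trans i1)
    rw [div_pow]; ring
  · refine (i2.trans hhi.le).trans (le_of_eq ?_)
    rw [mul_pow]; ring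
end
end
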